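/- arXiv:2410.24088 — 3 statements merged into one kernel-verified Lean document; each statement's English description precedes it below -/
import Mathlib

section
/- Let p be a prime, n ∈ ℕ, and a₁,…,a_n ∈ ℂ_p. Then there exists a constant c > 0 such that for all roots of unity ζ₁,…,ζ_n in ℂ_p, either Σ_{i=1}^n ζ_i·a_i = 0 or |Σ_{i=1}^n ζ_i·a_i|_p ≥ c. -/
set_option linter.unusedSectionVars false
set_option linter.unusedSimpArgs false

namespace TV
open Ideal

universe u

section witt
set_option linter.style.haveILetI false
variable {p : ℕ} [hp : Fact p.Prime]
    {K : Type u} [NontriviallyNormedField K] [IsUltrametricDist K]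
    [CompleteSpace K]

/-- The ring of integers. -/
noncomputable abbrev OO (K : Type*) [NontriviallyNormedField K] [IsUltrametricDist K] : Subring K :=
  (NormedField.valuation (K := K)).integer

theorem mem_OO (x : K) : x ∈ OO K ↔ ‖x‖ ≤ 1 := by
  rw [Valuation.mem_integer_iff]
  exact Iff.rfl

theorem norm_p_pow (hpn : ‖(p : K)‖ = (p : ℝ)⁻¹) (n : ℕ) : ‖(p : K) ^ n‖ = ((p : ℝ)⁻¹) ^ n := by
  rw [norm_pow, hpn]

theorem pK_ne (hpn : ‖(p : K)‖ = (p : ℝ)⁻¹) : (p : K) ≠ 0 := by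
  intro h
  rw [h, norm_zero] at hpn
  have : (p : ℝ) ≠ 0 := Nat.cast_ne_zero.mpr hp.out.ne_zero
  exact inv_ne_zero this hpn.symm

theorem dvd_OO (hpn : ‖(p : K)‖ = (p : ℝ)⁻¹) (n : ℕ) (x : OO K) :
    (p : OO K) ^ n ∣ x ↔ ‖(x : K)‖ ≤ ((p : ℝ)⁻¹) ^ n := by
  have hp0 := pK_ne hpn
  constructor
  · rintro ⟨y, rfl⟩
    have hy := (mem_OO (y : K)).1 y.2
    push_cast
    rw [norm_mul, norm_p_pow hpn]
    exact mul_le_of_le_one_right (by positivity) hy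
  · intro h
    refine ⟨⟨(x : K) / (p : K) ^ n, ?_⟩, ?_⟩
    · rw [mem_OO, norm_div, norm_p_pow hpn]
      exact div_le_one_of_le₀ h (by positivity)
    · ext
      push_cast
      field_simp

theorem um_sub (x y : K) : ‖x - y‖ ≤ max ‖x‖ ‖y‖ := by
  rw [sub_eq_add_neg, ← norm_neg y]
  exact IsUltrametricDist.norm_add_le_max _ _

theorem inv_p_lt : (p : ℝ)⁻¹ < 1 := inv_lt_one_of_one_lt₀ (by exact_mod_cast hp.out.one_lt)
theorem inv_p_pos : 0 < (p : ℝ)⁻¹ := inv_pos.mpr (by exact_mod_cast hp.out.pos)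

theorem eq_zero_of_norm_le {x : K} (h : ∀ n : ℕ, ‖x‖ ≤ ((p : ℝ)⁻¹) ^ n) : x = 0 := by
  have := ge_of_tendsto' (tendsto_pow_atTop_nhds_zero_of_lt_one inv_p_pos.le (inv_p_lt (p := p))) h
  exact norm_le_zero_iff.1 this

theorem not_isUnit_p (hpn : ‖(p : K)‖ = (p : ℝ)⁻¹) : ¬ IsUnit (p : OO K) := by
  intro h
  have h1 := isUnit_iff_dvd_one.1 h
  have := (dvd_OO hpn 1 (1 : OO K)).1 (by simpa using h1)
  simp only [OneMemClass.coe_one, norm_one, pow_one] at this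
  exact absurd this (not_le.2 inv_p_lt)

/-- `p`-adic Cauchy sequences converge, with the estimate. -/
theorem exists_lim (f : ℕ → K) (hf : ∀ m n, m ≤ n → ‖f m - f n‖ ≤ ((p : ℝ)⁻¹) ^ m) :
    ∃ L, ∀ n, ‖f n - L‖ ≤ ((p : ℝ)⁻¹) ^ n := by
  have hc : CauchySeq f := by
    refine cauchySeq_of_le_tendsto_0 (fun n => 2 * ((p : ℝ)⁻¹) ^ n) ?_ ?_
    · intro n m N hn hm
      rw [dist_eq_norm]
      have h1 := hf N n hn
      have h2 := hf N m hm
      calc ‖f n - f m‖ = ‖(f N - f m) - (f N - f n)‖ := by congr 1; ring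
        _ ≤ ‖f N - f m‖ + ‖f N - f n‖ := norm_sub_le _ _
        _ ≤ _ := by linarith
    · simpa using (tendsto_pow_atTop_nhds_zero_of_lt_one inv_p_pos.le
        (inv_p_lt (p := p))).const_mul 2
  obtain ⟨L, hL⟩ := cauchySeq_tendsto_of_complete hc
  refine ⟨L, fun n => ?_⟩
  have : Filter.Tendsto (fun m => ‖f n - f m‖) Filter.atTop (nhds ‖f n - L‖) :=
    (hL.const_sub (f n)).norm
  refine le_of_tendsto this ?_
  filter_upwards [Filter.eventually_ge_atTop n] with m hm using hf n m hm

theorem OO_complete (hpn : ‖(p : K)‖ = (p : ℝ)⁻¹) :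
    IsAdicComplete (span {(p : OO K)}) (OO K) where
  haus' := by
    intro x hx
    have : (x : K) = 0 := by
      refine eq_zero_of_norm_le (p := p) fun n => ?_
      have h := hx n
      rw [SModEq.zero, smul_eq_mul, mul_top, span_singleton_pow, mem_span_singleton] at h
      exact (dvd_OO hpn n x).1 h
    exact Subtype.ext this
  prec' := by
    intro f hf
    obtain ⟨L, hL⟩ := exists_lim (p := p) (fun n => (f n : K)) (by
      intro m n hmn
      have h := hf hmn
      rw [SModEq.sub_mem, smul_eq_mul, mul_top, span_singleton_pow, mem_span_singleton] at h
      simpa using (dvd_OO hpn m _).1 h)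
    have hLO : L ∈ OO K := by
      have h0 : f 0 - L ∈ OO K := (mem_OO _).2 (by simpa using hL 0)
      have := (OO K).sub_mem (f 0).2 h0
      simpa using this
    refine ⟨⟨L, hLO⟩, fun n => ?_⟩
    rw [SModEq.sub_mem, smul_eq_mul, mul_top, span_singleton_pow, mem_span_singleton]
    exact (dvd_OO hpn n _).2 (by simpa using hL n)

/-- The subring of Frobenius-periodic elements of a ring of characteristic `p`. -/
def per (R : Type*) [CommRing R] (p : ℕ) [Fact p.Prime] [CharP R p] : Subring R where
  carrier := {x | ∃ n, 0 < n ∧ x ^ p ^ n = x}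
  mul_mem' := by
    rintro x y ⟨m, hm, hx⟩ ⟨n, hn, hy⟩
    have aux : ∀ (z : R) (a b : ℕ), z ^ p ^ a = z → z ^ p ^ (a * b) = z := by
      intro z a b h
      induction b with
      | zero => simp
      | succ b ih => rw [mul_add, mul_one, pow_add, pow_mul, ih, h]
    refine ⟨m * n, by positivity, ?_⟩
    rw [mul_pow, aux x m n hx, mul_comm m n, aux y n m hy]
  one_mem' := ⟨1, one_pos, one_pow _⟩
  add_mem' := by
    rintro x y ⟨m, hm, hx⟩ ⟨n, hn, hy⟩
    have aux : ∀ (z : R) (a b : ℕ), z ^ p ^ a = z → z ^ p ^ (a * b) = z := by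
      intro z a b h
      induction b with
      | zero => simp
      | succ b ih => rw [mul_add, mul_one, pow_add, pow_mul, ih, h]
    refine ⟨m * n, by positivity, ?_⟩
    rw [add_pow_char_pow, aux x m n hx, mul_comm m n, aux y n m hy]
  zero_mem' := ⟨1, one_pos, zero_pow (by have := (Fact.out : p.Prime).pos; positivity)⟩
  neg_mem' := by
    rintro x ⟨m, hm, hx⟩
    refine ⟨m, hm, ?_⟩
    have h1 : (x + -x) ^ p ^ m = 0 := by
      rw [add_neg_cancel]; exact zero_pow (by have := (Fact.out : p.Prime).pos; positivity)
    rw [add_pow_char_pow, hx] at h1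
    exact (neg_eq_of_add_eq_zero_right h1).symm

theorem per_isField (R : Type*) [CommRing R] [IsDomain R] (p : ℕ) [hp : Fact p.Prime] [CharP R p] :
    IsField (per R p) where
  exists_pair_ne := ⟨0, 1, zero_ne_one⟩
  mul_comm := mul_comm
  mul_inv_cancel := by
    rintro ⟨x, n, hn, hx⟩ h0
    have hx0 : x ≠ 0 := fun h => h0 (Subtype.ext h)
    have h2 : 2 ≤ p ^ n := le_trans hp.out.two_le (Nat.le_self_pow hn.ne' p)
    refine ⟨⟨x, n, hn, hx⟩ ^ (p ^ n - 2), ?_⟩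
    ext
    push_cast
    have : x * (x * x ^ (p ^ n - 2)) = x * 1 := by
      rw [← pow_succ', ← pow_succ', mul_one]
      convert hx using 2
      omega
    exact mul_left_cancel₀ hx0 this

theorem per_perfect (R : Type*) [CommRing R] [IsDomain R] (p : ℕ) [hp : Fact p.Prime] [CharP R p] :
    PerfectRing (per R p) p := by
  refine ⟨?_⟩
  constructor
  · intro x y h
    exact frobenius_inj (per R p) p (by simpa [frobenius_def] using h)
  · rintro ⟨x, n, hn, hx⟩
    refine ⟨⟨x, n, hn, hx⟩ ^ (p ^ (n - 1)), ?_⟩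
    ext
    simp only [Subring.coe_pow, powMonoidHom_apply]
    rw [← pow_mul, ← pow_succ, Nat.sub_add_cancel hn, hx]

/-- Periodicity iterates. -/
theorem pow_per_iter {M : Type*} [Monoid M] {p : ℕ} {x : M} {n : ℕ} (h : x ^ p ^ n = x) (b : ℕ) :
    x ^ p ^ (n * b) = x := by
  induction b with
  | zero => simp
  | succ b ih => rw [mul_add, mul_one, pow_add, pow_mul, ih, h]

theorem norm_le_one_of_per {ζ : K} {n : ℕ} (hn : 0 < n) (h : ζ ^ p ^ n = ζ) : ‖ζ‖ ≤ 1 := by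
  by_contra hc
  push Not at hc
  have h1 : ‖ζ‖ ^ p ^ n = ‖ζ‖ := by rw [← norm_pow, h]
  have h2 : 1 < p ^ n := Nat.one_lt_pow hn.ne' hp.out.one_lt
  have := lt_self_pow₀ hc h2
  linarith

theorem per_unique (hpn : ‖(p : K)‖ = (p : ℝ)⁻¹) {x y : OO K} {n : ℕ} (hn : 0 < n)
    (hx : x ^ p ^ n = x) (hy : y ^ p ^ n = y) (h : (p : OO K) ∣ x - y) : x = y := by
  have : ((x - y : OO K) : K) = 0 := by
    refine eq_zero_of_norm_le (p := p) fun m => ?_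
    have h1 := dvd_sub_pow_of_dvd_sub h (n * m)
    rw [pow_per_iter hx, pow_per_iter hy] at h1
    refine ((dvd_OO hpn _ _).1 h1).trans ?_
    refine pow_le_pow_of_le_one inv_p_pos.le inv_p_lt.le ?_
    nlinarith
  rw [sub_eq_zero.1 (Subtype.ext this : x - y = 0)]

theorem exists_witt (hpn : ‖(p : K)‖ = (p : ℝ)⁻¹) :
    ∃ (k : Type u) (_ : Field k) (_ : CharP k p) (_ : PerfectRing k p)
      (θ : WittVector p k →+* K), (∀ w, w.coeff 0 ≠ 0 → ‖θ w‖ = 1) ∧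
      (∀ ζ : K, (∃ n, 0 < n ∧ ζ ^ p ^ n = ζ) → ∃ x : k, θ (WittVector.teichmuller p x) = ζ) := by
  haveI hu : Fact (¬ IsUnit (p : OO K)) := ⟨not_isUnit_p hpn⟩
  haveI := OO_complete (p := p) hpn
  haveI : IsDomain (PreTilt (OO K) p) := PreTilt.isDomain (K := K) (v := NormedField.valuation) (OO K)
    (Valuation.integer.integers _) p
  let k := per (PreTilt (OO K) p) p
  letI : Field k := (per_isField (PreTilt (OO K) p) p).toField
  haveI : CharP k p := inferInstance
  haveI : PerfectRing k p := per_perfect _ p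
  let θ₀ : WittVector p k →+* OO K :=
    (WittVector.fontaineTheta (OO K) p).comp (WittVector.map k.subtype)
  refine ⟨k, inferInstance, inferInstance, inferInstance, (OO K).subtype.comp θ₀, ?_, ?_⟩
  · intro w hw
    have h1 := WittVector.mk_fontaineTheta (WittVector.map k.subtype w)
    rw [WittVector.map_coeff] at h1
    have h2 : PreTilt.coeff 0 (k.subtype (w.coeff 0)) * PreTilt.coeff 0 (k.subtype (w.coeff 0)⁻¹)
        = 1 := by
      rw [← map_mul, ← map_mul, mul_inv_cancel₀ hw, map_one, map_one]
    rw [← h1] at h2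
    obtain ⟨y, hy⟩ := Ideal.Quotient.mk_surjective (PreTilt.coeff 0 (k.subtype (w.coeff 0)⁻¹))
    rw [← hy, ← map_mul, ← map_one (Ideal.Quotient.mk _), Ideal.Quotient.eq,
      mem_span_singleton] at h2
    have h3 := (dvd_OO hpn 1 _).1 (by simpa using h2)
    change ‖((θ₀ w : OO K) : K)‖ = 1
    have h4 : ‖((θ₀ w : OO K) : K)‖ ≤ 1 := (mem_OO _).1 (θ₀ w).2
    have h5 : ‖(y : K)‖ ≤ 1 := (mem_OO _).1 y.2
    refine le_antisymm h4 (not_lt.1 fun h6 => ?_)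
    have h7 : ‖((θ₀ w : OO K) : K) * y‖ < 1 := by
      rw [norm_mul]
      exact lt_of_le_of_lt (mul_le_of_le_one_right (norm_nonneg _) h5) h6
    have h8 : ‖(1 : K)‖ < 1 := by
      have : (1 : K) = ((θ₀ w : OO K) : K) * y - (((θ₀ w : OO K) : K) * y - 1) := by ring
      rw [this]
      refine lt_of_le_of_lt (um_sub _ _) (max_lt h7 ?_)
      refine lt_of_le_of_lt ?_ (inv_p_lt (p := p))
      simp only [pow_one] at h3
      exact h3
    simp at h8
  · rintro ζ ⟨n, hn, hζ⟩
    let z : OO K := ⟨ζ, (mem_OO _).2 (norm_le_one_of_per hn hζ)⟩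
    have hz : z ^ p ^ n = z := Subtype.ext (by simpa [z] using hζ)
    let mk := Ideal.Quotient.mk (span {(p : OO K)})
    let x : PreTilt (OO K) p := ⟨fun j => mk (z ^ p ^ ((n - 1) * j)), by
      intro j
      rw [← map_pow, ← pow_mul, ← pow_succ]
      congr 1
      have : (n - 1) * (j + 1) + 1 = n + (n - 1) * j := by
        obtain ⟨m, rfl⟩ := Nat.exists_eq_add_of_lt hn
        simp
        ring
      rw [this, pow_add, pow_mul, hz]⟩
    have hcoe : ∀ j, PreTilt.coeff j x = mk (z ^ p ^ ((n - 1) * j)) := fun j => rfl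
    have hx : x ^ p ^ n = x := by
      refine Perfection.ext fun j => ?_
      change PreTilt.coeff j (x ^ p ^ n) = PreTilt.coeff j x
      rw [map_pow, hcoe, ← map_pow, ← pow_mul, mul_comm, pow_mul, hz]
    refine ⟨⟨x, n, hn, hx⟩, ?_⟩
    change ((WittVector.fontaineTheta (OO K) p (WittVector.map k.subtype
      (WittVector.teichmuller p _)) : OO K) : K) = _
    rw [WittVector.map_teichmuller, WittVector.fontaineTheta_teichmuller]
    have : (PreTilt.untilt x) = z := by
      refine per_unique hpn hn ?_ hz ?_
      · rw [← map_pow, hx]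
      · rw [← mem_span_singleton, ← Ideal.Quotient.eq, PreTilt.mk_untilt_eq_coeff_zero, hcoe]
        simp [mk]
    exact congrArg Subtype.val this
end witt

section theta
variable {p : ℕ} [hp : Fact p.Prime]
    {K : Type u} [NontriviallyNormedField K] [IsUltrametricDist K]
    [CompleteSpace K] (hpn : ‖(p : K)‖ = (p : ℝ)⁻¹)
    {k : Type u} [Field k] [CharP k p] [PerfectRing k p] (θ : WittVector p k →+* K)
    (h1 : ∀ w, w.coeff 0 ≠ 0 → ‖θ w‖ = 1)
include hpn h1

theorem theta_norm (w : WittVector p k) (hw : w ≠ 0) : ∃ (m : ℕ) (b : WittVector p k),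
    b.coeff 0 ≠ 0 ∧ w = (p : WittVector p k) ^ m * b ∧ ‖θ w‖ = ((p : ℝ)⁻¹) ^ m := by
  obtain ⟨m, b, hb, rfl⟩ := WittVector.exists_eq_pow_p_mul w hw
  refine ⟨m, b, hb, rfl, ?_⟩
  rw [map_mul, map_pow, map_natCast, norm_mul, h1 b hb, norm_p_pow hpn, mul_one]

theorem theta_ne (w : WittVector p k) (hw : w ≠ 0) : θ w ≠ 0 := by
  obtain ⟨m, b, -, -, h⟩ := theta_norm hpn θ h1 w hw
  intro h0
  rw [h0, norm_zero] at h
  exact (pow_pos (inv_p_pos (p := p)) m).ne h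

theorem theta_le (w : WittVector p k) (n : ℕ) (h : ‖θ w‖ ≤ ((p : ℝ)⁻¹) ^ n) :
    (p : WittVector p k) ^ n ∣ w := by
  by_cases hw : w = 0
  · rw [hw]; exact dvd_zero _
  obtain ⟨m, b, -, rfl, h'⟩ := theta_norm hpn θ h1 w hw
  rw [h'] at h
  have : n ≤ m := (pow_le_pow_iff_right_of_lt_one₀ inv_p_pos inv_p_lt).1 h
  exact Dvd.dvd.mul_right (pow_dvd_pow _ this) _

theorem theta_le' (w : WittVector p k) (n : ℕ) (h : (p : WittVector p k) ^ n ∣ w) :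
    ‖θ w‖ ≤ ((p : ℝ)⁻¹) ^ n := by
  obtain ⟨b, rfl⟩ := h
  rw [map_mul, map_pow, map_natCast, norm_mul, norm_p_pow hpn]
  refine mul_le_of_le_one_right (by positivity) ?_
  by_cases hb : b = 0
  · simp [hb]
  obtain ⟨m, c, -, -, h'⟩ := theta_norm hpn θ h1 b hb
  rw [h']
  exact pow_le_one₀ inv_p_pos.le inv_p_lt.le

/-- The subfield `Frac W(k)` of `K`. -/
def F0 : Subfield K where
  carrier := {x | ∃ (m : ℕ) (w : WittVector p k), (p : K) ^ m * x = θ w}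
  mul_mem' := by
    rintro x y ⟨m, w, h⟩ ⟨m', w', h'⟩
    exact ⟨m + m', w * w', by rw [map_mul, ← h, ← h']; ring⟩
  one_mem' := ⟨0, 1, by simp⟩
  add_mem' := by
    rintro x y ⟨m, w, h⟩ ⟨m', w', h'⟩
    refine ⟨m + m', (p : WittVector p k) ^ m' * w + (p : WittVector p k) ^ m * w', ?_⟩
    rw [map_add, map_mul, map_mul, ← h, ← h']
    simp only [map_pow, map_natCast]
    ring
  zero_mem' := ⟨0, 0, by simp⟩
  neg_mem' := by
    rintro x ⟨m, w, h⟩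
    exact ⟨m, -w, by rw [map_neg, ← h]; ring⟩
  inv_mem' := by
    rintro x ⟨m, w, h⟩
    have hp0 := pK_ne hpn
    by_cases hw : w = 0
    · have : x = 0 := by
        rw [hw, map_zero] at h
        exact (mul_eq_zero.1 h).resolve_left (pow_ne_zero _ hp0)
      exact ⟨0, 0, by simp [this]⟩
    obtain ⟨n, b, hb, rfl, -⟩ := theta_norm hpn θ h1 w hw
    have hu := WittVector.isUnit_of_coeff_zero_ne_zero b hb
    obtain ⟨b', hb'⟩ := hu.exists_right_inv
    have hbb : θ b * θ b' = 1 := by rw [← map_mul, hb', map_one]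
    refine ⟨n, (p : WittVector p k) ^ m * b', ?_⟩
    simp only [map_mul, map_pow, map_natCast] at h ⊢
    have hx : x ≠ 0 := by
      rintro rfl
      rw [mul_zero] at h
      have := (mul_eq_zero.1 h.symm).resolve_left (pow_ne_zero _ hp0)
      rw [this, zero_mul] at hbb
      exact zero_ne_one hbb
    field_simp
    calc (p : K) ^ n = (p : K) ^ n * (θ b * θ b') := by rw [hbb, mul_one]
      _ = (p ^ n * θ b) * θ b' := by ring
      _ = _ := by rw [← h]; ring

theorem mem_F0 (x : K) : x ∈ F0 hpn θ h1 ↔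
    ∃ (m : ℕ) (w : WittVector p k), (p : K) ^ m * x = θ w := Iff.rfl

theorem F0_int (x : K) (hx : x ∈ F0 hpn θ h1) (h : ‖x‖ ≤ 1) : ∃ w, x = θ w := by
  obtain ⟨m, w, hw⟩ := hx
  have : (p : WittVector p k) ^ m ∣ w := by
    apply theta_le hpn θ h1
    rw [← hw, norm_mul, norm_p_pow hpn]
    exact mul_le_of_le_one_right (by have := inv_p_pos (p := p); positivity) h
  obtain ⟨b, rfl⟩ := this
  refine ⟨b, ?_⟩
  simp only [map_mul, map_pow, map_natCast] at hw
  exact mul_left_cancel₀ (pow_ne_zero _ (pK_ne hpn)) hw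

theorem F0_norm (x : K) (hx : x ∈ F0 hpn θ h1) (h : x ≠ 0) : ∃ z : ℤ, ‖x‖ = (p : ℝ) ^ z := by
  obtain ⟨m, w, hw⟩ := hx
  have hp0 := pK_ne hpn
  have hw0 : w ≠ 0 := by
    rintro rfl
    rw [map_zero] at hw
    exact h ((mul_eq_zero.1 hw).resolve_left (pow_ne_zero _ hp0))
  obtain ⟨n, b, -, -, hn⟩ := theta_norm hpn θ h1 w hw0
  rw [← hw, norm_mul, norm_p_pow hpn] at hn
  have hpr : (p : ℝ) ≠ 0 := by exact_mod_cast hp.out.ne_zero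
  refine ⟨(m : ℤ) - n, ?_⟩
  rw [zpow_sub₀ hpr, zpow_natCast, zpow_natCast]
  field_simp at hn ⊢
  have e : (p : ℝ)⁻¹ ^ n * p ^ n = 1 := by rw [← mul_pow, inv_mul_cancel₀ hpr, one_pow]
  have e' : (p : ℝ)⁻¹ ^ m * p ^ m = 1 := by rw [← mul_pow, inv_mul_cancel₀ hpr, one_pow]
  first
  | linear_combination hn
  | linear_combination (p : ℝ) ^ n * (p : ℝ) ^ m * hn + (p : ℝ) ^ m * e - ‖x‖ * p ^ n * e'

theorem F0_closed : IsClosed (F0 hpn θ h1 : Set K) := by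
  rw [← closure_subset_iff_isClosed]
  intro x hx
  have hp0 := pK_ne hpn
  obtain ⟨M, hM⟩ : ∃ M : ℕ, ‖(p : K) ^ M * x‖ ≤ 1 := by
    have ht := (tendsto_pow_atTop_nhds_zero_of_lt_one inv_p_pos.le (inv_p_lt (p := p))).mul_const ‖x‖
    rw [zero_mul] at ht
    obtain ⟨M, hM⟩ := (ht.eventually (gt_mem_nhds one_pos)).exists
    exact ⟨M, by rw [norm_mul, norm_p_pow hpn]; exact hM.le⟩
  have key : ∀ n : ℕ, ∃ w, ‖(p : K) ^ M * x - θ w‖ ≤ ((p : ℝ)⁻¹) ^ n := by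
    intro n
    obtain ⟨y, hy, hxy⟩ := Metric.mem_closure_iff.1 hx _ (pow_pos (inv_p_pos (p := p)) n)
    rw [dist_eq_norm] at hxy
    have e : ‖(p : K) ^ M * x - (p : K) ^ M * y‖ ≤ ((p : ℝ)⁻¹) ^ n := by
      rw [← mul_sub, norm_mul, norm_p_pow hpn]
      exact (mul_le_of_le_one_left (norm_nonneg _)
        (pow_le_one₀ inv_p_pos.le inv_p_lt.le)).trans hxy.le
    have hn : ‖(p : K) ^ M * y‖ ≤ 1 := by
      have := um_sub ((p : K) ^ M * x) ((p : K) ^ M * x - (p : K) ^ M * y)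
      rw [sub_sub_cancel] at this
      exact this.trans (max_le hM (e.trans (pow_le_one₀ inv_p_pos.le inv_p_lt.le)))
    obtain ⟨w, hw⟩ := F0_int hpn θ h1 ((p : K) ^ M * y)
      (mul_mem (pow_mem (natCast_mem _ _) _) hy) hn
    exact ⟨w, by rw [← hw]; exact e⟩
  choose w hw using key
  have hcau : ∀ {m n : ℕ}, m ≤ n → w m ≡ w n
      [SMOD (span {(p : WittVector p k)} ^ m • ⊤ : Submodule (WittVector p k) (WittVector p k))] := by
    intro m n hmn
    rw [SModEq.sub_mem, smul_eq_mul, mul_top, span_singleton_pow, mem_span_singleton]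
    apply theta_le hpn θ h1
    rw [map_sub]
    have := um_sub ((p : K) ^ M * x - θ (w n)) ((p : K) ^ M * x - θ (w m))
    rw [sub_sub_sub_cancel_left] at this
    exact this.trans (max_le ((hw n).trans
      (pow_le_pow_of_le_one inv_p_pos.le inv_p_lt.le hmn)) (hw m))
  obtain ⟨L, hL⟩ := IsPrecomplete.prec' w hcau
  refine (mem_F0 hpn θ h1 x).2 ⟨M, L, ?_⟩
  rw [← sub_eq_zero]
  refine eq_zero_of_norm_le (p := p) fun n => ?_
  have h2 := hL n
  rw [SModEq.sub_mem, smul_eq_mul, mul_top, span_singleton_pow, mem_span_singleton] at h2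
  have h3 := theta_le' hpn θ h1 _ n h2
  rw [map_sub] at h3
  have := IsUltrametricDist.norm_add_le_max ((p : K) ^ M * x - θ (w n)) (θ (w n) - θ L)
  rw [sub_add_sub_cancel] at this
  exact this.trans (max_le (hw n) h3)

omit hpn h1 in
/-- Noetherianity gives the uniform bound for Witt vectors. -/
theorem noeth {ι : Type} [Fintype ι] (a : ι → WittVector p k) :
    ∃ N : ℕ, ∀ x : ι → k,
      (∀ j < N, (∑ i, WittVector.teichmuller p (x i) * a i).coeff j = 0) →
      ∑ i, WittVector.teichmuller p (x i) * a i = 0 := by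
  let G : WittVector p (MvPolynomial ι k) :=
    ∑ i, WittVector.teichmuller p (MvPolynomial.X i) * WittVector.map MvPolynomial.C (a i)
  have hG : ∀ x : ι → k, WittVector.map (MvPolynomial.eval x) G =
      ∑ i, WittVector.teichmuller p (x i) * a i := by
    intro x
    simp only [G, map_sum, map_mul, WittVector.map_teichmuller, MvPolynomial.eval_X]
    refine Finset.sum_congr rfl fun i _ => ?_
    congr 1
    ext n
    simp [WittVector.map_coeff]
  let I : ℕ →o Ideal (MvPolynomial ι k) :=
    ⟨fun m => span {f | ∃ j < m, f = G.coeff j}, fun m n hmn => span_mono (by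
      rintro f ⟨j, hj, rfl⟩; exact ⟨j, lt_of_lt_of_le hj hmn, rfl⟩)⟩
  obtain ⟨N, hN⟩ := monotone_stabilizes_iff_noetherian.2
    (inferInstance : IsNoetherian (MvPolynomial ι k) (MvPolynomial ι k)) I
  refine ⟨N, fun x hx => ?_⟩
  have h0 : I N ≤ RingHom.ker (MvPolynomial.eval x) := by
    refine span_le.2 ?_
    rintro f ⟨j, hj, rfl⟩
    have := hx j hj
    rw [← hG, WittVector.map_coeff] at this
    exact this
  rw [← hG]
  ext j
  rw [WittVector.map_coeff, WittVector.zero_coeff]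
  rcases le_total N (j + 1) with h | h
  · rw [hN _ h] at h0
    exact h0 (subset_span ⟨j, Nat.lt_succ_self j, rfl⟩)
  · exact h0 (subset_span ⟨j, h, rfl⟩)

theorem teich_F0 (h2 : ∀ ζ : K, (∃ n, 0 < n ∧ ζ ^ p ^ n = ζ) →
      ∃ x : k, θ (WittVector.teichmuller p x) = ζ)
    {ι : Type} [Fintype ι] (a : ι → K) (ha : ∀ i, a i ∈ F0 hpn θ h1) :
    ∃ c : ℝ, 0 < c ∧ ∀ ζ : ι → K, (∀ i, ∃ n, 0 < n ∧ ζ i ^ p ^ n = ζ i) →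
      (∑ i, ζ i * a i = 0 ∨ c ≤ ‖∑ i, ζ i * a i‖) := by
  have hp0 := pK_ne hpn
  choose m w hw using ha
  let M := ∑ i, m i
  have hM : ∀ i, m i ≤ M := fun i => Finset.single_le_sum (fun _ _ => Nat.zero_le _) (Finset.mem_univ i)
  let b : ι → WittVector p k := fun i => (p : WittVector p k) ^ (M - m i) * w i
  have hb : ∀ i, θ (b i) = (p : K) ^ M * a i := by
    intro i
    simp only [b, map_mul, map_pow, map_natCast]
    rw [← hw, ← mul_assoc, ← pow_add, Nat.sub_add_cancel (hM i)]
  obtain ⟨N, hN⟩ := noeth b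
  refine ⟨((p : ℝ)⁻¹) ^ N, pow_pos inv_p_pos _, fun ζ hζ => ?_⟩
  choose x hx using fun i => h2 (ζ i) (hζ i)
  have hS : θ (∑ i, WittVector.teichmuller p (x i) * b i) = (p : K) ^ M * ∑ i, ζ i * a i := by
    rw [map_sum, Finset.mul_sum]
    refine Finset.sum_congr rfl fun i _ => ?_
    rw [map_mul, hx, hb]; ring
  rw [or_iff_not_imp_right]
  intro hlt
  push Not at hlt
  have h3 : ‖θ (∑ i, WittVector.teichmuller p (x i) * b i)‖ ≤ ((p : ℝ)⁻¹) ^ N := by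
    rw [hS, norm_mul, norm_p_pow hpn]
    exact (mul_le_of_le_one_left (norm_nonneg _)
        (pow_le_one₀ inv_p_pos.le inv_p_lt.le)).trans hlt.le
  have h4 := theta_le hpn θ h1 _ N h3
  rw [← mem_span_singleton,
    WittVector.mem_span_p_pow_iff_le_coeff_eq_zero] at h4
  have h5 := hN x (by intro j hj; exact h4 j hj)
  rw [h5, map_zero] at hS
  exact (mul_eq_zero.1 hS.symm).resolve_left (pow_ne_zero _ hp0)

end theta

/-- Summary: the closed subfield `F` of unramified elements. -/
theorem exists_F {p : ℕ} [hp : Fact p.Prime]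
    {K : Type u} [NontriviallyNormedField K] [IsUltrametricDist K]
    [CompleteSpace K] (hpn : ‖(p : K)‖ = (p : ℝ)⁻¹) :
    ∃ F : Subfield K, IsClosed (F : Set K) ∧ (∀ x ∈ F, x ≠ 0 → ∃ z : ℤ, ‖x‖ = (p : ℝ) ^ z) ∧
      (∀ ζ : K, (∃ n, 0 < n ∧ ζ ^ p ^ n = ζ) → ζ ∈ F) ∧
      ∀ (ι : Type) [Fintype ι] (a : ι → K), (∀ i, a i ∈ F) →
        ∃ c : ℝ, 0 < c ∧ ∀ ζ : ι → K, (∀ i, ∃ n, 0 < n ∧ ζ i ^ p ^ n = ζ i) →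
          (∑ i, ζ i * a i = 0 ∨ c ≤ ‖∑ i, ζ i * a i‖) := by
  obtain ⟨k, i1, i2, i3, θ, h1, h2⟩ := exists_witt (p := p) (K := K) hpn
  refine ⟨F0 hpn θ h1, F0_closed hpn θ h1, F0_norm hpn θ h1, ?_, ?_⟩
  · intro ζ hζ
    obtain ⟨x, hx⟩ := h2 ζ hζ
    exact ⟨0, WittVector.teichmuller p x, by rw [hx]; simp⟩
  · intro ι _ a ha
    exact teich_F0 hpn θ h1 h2 a ha

section descend

/-- Descent of the coefficients to a closed subfield. -/
theorem descend {p : ℕ} [hp : Fact p.Prime]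
    {K : Type u} [NontriviallyNormedField K] [IsUltrametricDist K]
    [CompleteSpace K] (hpn : ‖(p : K)‖ = (p : ℝ)⁻¹) (F : Subfield K) (hF : IsClosed (F : Set K))
    {ι : Type} [Fintype ι] (T : Set (ι → K)) (hT : ∀ ζ ∈ T, ∀ i, ζ i ∈ F)
    (h : ∀ a : ι → K, (∀ i, a i ∈ F) → ∃ c : ℝ, 0 < c ∧ ∀ ζ ∈ T,
      (∑ i, ζ i * a i = 0 ∨ c ≤ ‖∑ i, ζ i * a i‖))
    (a : ι → K) : ∃ c : ℝ, 0 < c ∧ ∀ ζ ∈ T,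
      (∑ i, ζ i * a i = 0 ∨ c ≤ ‖∑ i, ζ i * a i‖) := by
  letI inst1 : NontriviallyNormedField F :=
    { (inferInstance : NormedField F) with
      non_trivial := ⟨(p : F)⁻¹, by
        change 1 < ‖((p : F)⁻¹ : F).1‖
        push_cast
        rw [norm_inv, hpn, inv_inv]
        exact_mod_cast hp.out.one_lt⟩ }
  haveI : CompleteSpace F := hF.completeSpace_coe
  letI : NormedSpace F K := ⟨fun x y => (norm_mul (x : K) y).le⟩
  let V : Submodule F K := Submodule.span F (Set.range a)
  haveI : FiniteDimensional F V := FiniteDimensional.span_of_finite F (Set.finite_range a)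
  let b := Module.finBasis F V
  let d := Module.finrank F V
  have haV : ∀ i, a i ∈ V := fun i => Submodule.subset_span ⟨i, rfl⟩
  let f : Fin d → (V →L[F] F) := fun j => LinearMap.toContinuousLinearMap (b.coord j)
  have hc : ∀ j : Fin d, ∃ c : ℝ, 0 < c ∧ ∀ ζ ∈ T,
      (∑ i, ζ i * (f j ⟨a i, haV i⟩ : K) = 0 ∨ c ≤ ‖∑ i, ζ i * (f j ⟨a i, haV i⟩ : K)‖) :=
    fun j => h (fun i => (f j ⟨a i, haV i⟩ : K)) (fun i => (f j ⟨a i, haV i⟩).2)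
  choose c hc0 hc using hc
  obtain ⟨e, he0, he⟩ : ∃ e : ℝ, 0 < e ∧ ∀ j, e ≤ c j / (‖f j‖ + 1) := by
    rcases isEmpty_or_nonempty (Fin d) with h | h
    · exact ⟨1, one_pos, fun j => (h.false j).elim⟩
    · obtain ⟨j0, hj0⟩ := Finite.exists_min (fun j => c j / (‖f j‖ + 1))
      exact ⟨_, div_pos (hc0 j0) (by positivity), hj0⟩
  refine ⟨e, he0, fun ζ hζ => ?_⟩
  rw [or_iff_not_imp_left]
  intro hne
  let v : V := ∑ i, (⟨ζ i, hT ζ hζ i⟩ : F) • ⟨a i, haV i⟩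
  have hv : (v : K) = ∑ i, ζ i * a i := by
    simp only [v, AddSubmonoidClass.coe_finsetSum, Submodule.coe_smul]
    rfl
  have hv0 : v ≠ 0 := by
    intro h0
    apply hne
    rw [← hv, h0]; rfl
  have hfv : ∀ j, ((f j v : F) : K) = ∑ i, ζ i * (f j ⟨a i, haV i⟩ : K) := by
    intro j
    simp only [v, map_sum, map_smul, smul_eq_mul, AddSubmonoidClass.coe_finsetSum]
    rfl
  obtain ⟨j, hj⟩ : ∃ j, f j v ≠ 0 := by
    by_contra hall
    push Not at hall
    apply hv0
    apply b.ext_elem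
    intro j
    simpa [f] using hall j
  have h3 := (hc j ζ hζ).resolve_left (by
    rw [← hfv]; intro h0; exact hj (Subtype.ext h0))
  rw [← hfv] at h3
  have h4 : ‖((f j v : F) : K)‖ ≤ ‖f j‖ * ‖v‖ := (f j).le_opNorm v
  have h5 : ‖v‖ = ‖∑ i, ζ i * a i‖ := by rw [← hv]; rfl
  rw [← h5]
  refine (he j).trans ?_
  rw [div_le_iff₀ (by positivity)]
  nlinarith [norm_nonneg v]

end descend

section ortho
variable {p : ℕ} [hp : Fact p.Prime]
    {K : Type u} [NontriviallyNormedField K] [IsUltrametricDist K]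
    (hpn : ‖(p : K)‖ = (p : ℝ)⁻¹)

/-- Ultrametric sum with pairwise distinct nonzero norms. -/
theorem norm_le_sum_of_ne (n : ℕ) (f : ℕ → K)
    (hf : ∀ i < n, ∀ j < n, i ≠ j → f i ≠ 0 → ‖f i‖ ≠ ‖f j‖) :
    ∀ i < n, ‖f i‖ ≤ ‖∑ j ∈ Finset.range n, f j‖ := by
  intro i hi
  have hne : (Finset.range n).Nonempty := ⟨i, Finset.mem_range.2 hi⟩
  obtain ⟨m, hm, hmax⟩ := Finset.exists_max_image (Finset.range n) (fun j => ‖f j‖) hne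
  rw [Finset.mem_range] at hm
  refine (hmax i (Finset.mem_range.2 hi)).trans ?_
  by_cases h0 : f m = 0
  · simp [h0]
  refine le_of_eq (IsNonarchimedean.apply_sum_eq_of_lt (f := fun x : K => ‖x‖)
    IsUltrametricDist.norm_add_le_max (fun a => (norm_neg a).symm) (Finset.mem_range.2 hm) ?_).symm
  intro j hj hjm
  exact lt_of_le_of_ne (hmax j hj) (hf m hm j (Finset.mem_range.1 hj) hjm.symm h0).symm

theorem um_sum {ι : Type*} (s : Finset ι) (f : ι → K) (C : ℝ) (hC : 0 ≤ C)
    (h : ∀ i ∈ s, ‖f i‖ ≤ C) : ‖∑ i ∈ s, f i‖ ≤ C :=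
  IsUltrametricDist.norm_sum_le_of_forall_le_of_nonneg hC h

theorem norm_root {x : K} {n : ℕ} (hn : n ≠ 0) (h : x ^ n = 1) : ‖x‖ = 1 := by
  have : ‖x‖ ^ n = 1 := by rw [← norm_pow, h, norm_one]
  exact (pow_eq_one_iff_of_nonneg (norm_nonneg _) hn).1 this

theorem one_sub_pow_le {x : K} (hx : ‖x‖ = 1) (j : ℕ) : ‖1 - x ^ j‖ ≤ ‖1 - x‖ := by
  rw [← mul_neg_geom_sum, norm_mul]
  refine mul_le_of_le_one_right (norm_nonneg _) (um_sum _ _ _ zero_le_one ?_)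
  intro i _
  rw [norm_pow, hx, one_pow]

include hpn

theorem norm_pi (m : ℕ) {ω : K} (hω : IsPrimitiveRoot ω (p ^ (m + 1))) :
    ‖ω - 1‖ ^ (p ^ m * (p - 1)) = (p : ℝ)⁻¹ := by
  have hp0 : p ^ (m + 1) ≠ 0 := pow_ne_zero _ hp.out.ne_zero
  haveI : NeZero (p ^ (m + 1)) := ⟨hp0⟩
  have h1 := Polynomial.eval_one_cyclotomic_prime_pow (R := K) (p := p) m
  rw [Polynomial.cyclotomic_eq_prod_X_sub_primitiveRoots hω, Polynomial.eval_prod] at h1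
  simp only [Polynomial.eval_sub, Polynomial.eval_X, Polynomial.eval_C] at h1
  have h2 := congrArg norm h1
  rw [norm_prod, hpn] at h2
  rw [← h2, Finset.prod_congr rfl (g := fun _ => ‖ω - 1‖), Finset.prod_const,
    hω.card_primitiveRoots, Nat.totient_prime_pow_succ hp.out]
  intro μ hμ
  rw [mem_primitiveRoots (Nat.pos_of_ne_zero hp0)] at hμ
  obtain ⟨i, -, hi⟩ := hω.eq_pow_of_pow_eq_one hμ.pow_eq_one
  obtain ⟨j, -, hj⟩ := hμ.eq_pow_of_pow_eq_one hω.pow_eq_one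
  rw [norm_sub_rev ω]
  apply le_antisymm
  · rw [← hi]; exact one_sub_pow_le (norm_root hp0 hω.pow_eq_one) i
  · rw [← hj]; exact one_sub_pow_le (norm_root hp0 hμ.pow_eq_one) j

theorem ortho1 (F : Subfield K) (hF : ∀ x ∈ F, x ≠ 0 → ∃ z : ℤ, ‖x‖ = (p : ℝ) ^ z)
    (m : ℕ) {ω : K} (hω : IsPrimitiveRoot ω (p ^ (m + 1))) (c : ℕ → F) :
    ∀ j < p ^ m * (p - 1), ‖(c j : K)‖ ≤
      p * ‖∑ t ∈ Finset.range (p ^ m * (p - 1)), (c t : K) * ω ^ t‖ := by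
  set d := p ^ m * (p - 1) with hd
  have hd0 : 0 < d := Nat.mul_pos (pow_pos hp.out.pos _) (Nat.sub_pos_of_lt hp.out.one_lt)
  set S := ∑ t ∈ Finset.range d, (c t : K) * ω ^ t with hS
  have hpi := norm_pi hpn m hω
  rw [← hd] at hpi
  set r := ‖ω - 1‖ with hr
  have hpr : (1 : ℝ) < p := by exact_mod_cast hp.out.one_lt
  have hr0 : 0 < r := by
    refine lt_of_le_of_ne (norm_nonneg _) fun h => ?_
    rw [← h, zero_pow hd0.ne'] at hpi
    exact (inv_p_pos (p := p)).ne hpi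
  have hr1 : r ≤ 1 := by
    by_contra hc
    push Not at hc
    have := one_lt_pow₀ hc hd0.ne'
    rw [hpi] at this
    exact absurd this (not_lt.2 inv_p_lt.le)
  let P : Polynomial F := ∑ t ∈ Finset.range d, Polynomial.C (c t) * Polynomial.X ^ t
  have hPc : ∀ j < d, P.coeff j = c j := by
    intro j hj
    simp only [P, Polynomial.finsetSum_coeff, Polynomial.coeff_C_mul, Polynomial.coeff_X_pow]
    simp [hj]
  have hPd : P.natDegree < d := by
    refine lt_of_le_of_lt (Polynomial.natDegree_sum_le_of_forall_le (n := d - 1) _ _ ?_) (by omega)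
    intro t ht
    rw [Finset.mem_range] at ht
    exact (Polynomial.natDegree_C_mul_X_pow_le _ _).trans (by omega)
  have hPe : Polynomial.aeval ω P = S := by
    simp only [P, map_sum, map_mul, Polynomial.aeval_C, map_pow, Polynomial.aeval_X]
    rfl
  let Q := Polynomial.taylor 1 P
  have hQd : Q.natDegree < d := by rw [Polynomial.natDegree_taylor]; exact hPd
  have hQe : Polynomial.aeval (ω - 1) Q = S := by
    rw [← hPe]
    simp only [Q, Polynomial.taylor_apply, Polynomial.aeval_comp]
    simp
  rw [Polynomial.aeval_eq_sum_range' hQd] at hQe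
  have hQn : ∀ l < d, ‖(Q.coeff l : K)‖ * r ^ l ≤ ‖S‖ := by
    intro l hl
    have := norm_le_sum_of_ne d (fun l => (Q.coeff l : K) * (ω - 1) ^ l) ?_ l hl
    · rw [norm_mul, norm_pow] at this
      refine this.trans (le_of_eq ?_)
      rw [← hQe]; rfl
    intro i hi j hj hij h0 he
    rw [norm_mul, norm_mul, norm_pow, norm_pow] at he
    have hqi : (Q.coeff i : K) ≠ 0 := left_ne_zero_of_mul h0
    have hqj : (Q.coeff j : K) ≠ 0 := by
      intro h
      rw [h, norm_zero, zero_mul] at he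
      have : 0 < ‖(Q.coeff i : K)‖ * r ^ i := mul_pos (norm_pos_iff.2 hqi) (pow_pos hr0 _)
      exact this.ne' he
    obtain ⟨z, hz⟩ := hF _ (Q.coeff i).2 hqi
    obtain ⟨z', hz'⟩ := hF _ (Q.coeff j).2 hqj
    change _ * r ^ i = _ * r ^ j at he
    rw [hz, hz'] at he
    have h2 := congrArg (fun x => x ^ d) he
    simp only [mul_pow] at h2
    have ha : ∀ i : ℕ, (r ^ i) ^ d = (p : ℝ) ^ (-(i : ℤ)) := by
      intro i
      rw [← pow_mul, mul_comm i, pow_mul, hpi, inv_pow, zpow_neg, zpow_natCast]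
    have hb : ∀ z : ℤ, ((p : ℝ) ^ z) ^ d = (p : ℝ) ^ (z * d) := by
      intro z
      rw [zpow_mul, zpow_natCast]
    have hp0 : (p : ℝ) ≠ 0 := by positivity
    rw [ha, ha, hb, hb, ← zpow_add₀ hp0, ← zpow_add₀ hp0] at h2
    have h3 := zpow_right_injective₀ (by positivity) hpr.ne' h2
    have h4 : (d : ℤ) ∣ i - j := ⟨z - z', by linear_combination -h3⟩
    have h5 := Int.eq_zero_of_abs_lt_dvd h4 (by rw [abs_lt]; omega)
    omega
  have hQb : ∀ l < d, ‖(Q.coeff l : K)‖ ≤ p * ‖S‖ := by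
    intro l hl
    have h1 := hQn l hl
    have h2 : (p : ℝ)⁻¹ ≤ r ^ l := by
      rw [← hpi]; exact pow_le_pow_of_le_one hr0.le hr1 hl.le
    have h3 : ‖(Q.coeff l : K)‖ * (p : ℝ)⁻¹ ≤ ‖S‖ :=
      (mul_le_mul_of_nonneg_left h2 (norm_nonneg _)).trans h1
    rw [← div_eq_mul_inv, div_le_iff₀ (by positivity)] at h3
    linarith
  intro j hj
  have h1 := Polynomial.sum_taylor_eq P 1
  rw [Polynomial.sum_over_range' _ (by simp) d hQd] at h1
  rw [← hPc j hj, ← h1, Polynomial.finsetSum_coeff, AddSubmonoidClass.coe_finsetSum]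
  refine um_sum _ _ _ (by positivity) fun l hl => ?_
  rw [Polynomial.coeff_C_mul]
  have h2 : ((Polynomial.X - Polynomial.C (1 : F)) ^ l) =
      ((Polynomial.X - Polynomial.C (1 : ℤ)) ^ l).map (Int.castRingHom F) := by simp
  rw [h2, Polynomial.coeff_map]
  have h3 : ‖((((Int.castRingHom F) (((Polynomial.X - Polynomial.C (1 : ℤ)) ^ l).coeff j)) : F) : K)‖
      ≤ 1 := by
    simpa using IsUltrametricDist.norm_intCast_le_one K _
  rw [MulMemClass.coe_mul, norm_mul]
  exact (mul_le_of_le_one_right (norm_nonneg _) h3).trans (hQb l (Finset.mem_range.1 hl))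

/-- The graded pieces. -/
def VV (F : Subfield K) (p M d : ℕ) (ω κ : K) : Submodule F K :=
  Submodule.span F {x | ∃ t < d, (ω ^ t) ^ p ^ M = κ ∧ x = ω ^ t}

theorem VV_coeff (F : Subfield K) (M d : ℕ) (ω κ x : K) (hx : x ∈ VV F p M d ω κ) :
    ∃ c : ℕ → F, (∀ t, c t ≠ 0 → (ω ^ t) ^ p ^ M = κ) ∧
      x = ∑ t ∈ Finset.range d, (c t : K) * ω ^ t := by
  induction hx using Submodule.span_induction with
  | mem x h =>
    obtain ⟨t, ht, hk, rfl⟩ := h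
    refine ⟨Pi.single t 1, ?_, ?_⟩
    · intro s hs
      by_cases h : s = t
      · rw [h, hk]
      · exact absurd (by simp [h]) hs
    · rw [Finset.sum_eq_single t]
      · simp
      · intro s _ hs; simp [hs]
      · intro h; exact absurd (Finset.mem_range.2 ht) h
  | zero => exact ⟨0, fun t h => absurd rfl h, by simp⟩
  | add x y _ _ hx hy =>
    obtain ⟨c, hc, rfl⟩ := hx
    obtain ⟨c', hc', rfl⟩ := hy
    refine ⟨c + c', ?_, ?_⟩
    · intro t ht
      by_cases h : c t = 0
      · apply hc'; intro h'; apply ht; simp [h, h']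
      · exact hc t h
    · rw [← Finset.sum_add_distrib]
      refine Finset.sum_congr rfl fun t _ => ?_
      simp [add_mul]
  | smul a x _ hx =>
    obtain ⟨c, hc, rfl⟩ := hx
    refine ⟨fun t => a * c t, fun t ht => hc t (right_ne_zero_of_mul ht), ?_⟩
    change (a : K) * _ = _
    rw [Finset.mul_sum]
    refine Finset.sum_congr rfl fun t _ => ?_
    push_cast
    ring

theorem VV_mem (F : Subfield K) (M m : ℕ) (hM : 1 ≤ M) (hMm : M ≤ m + 1) {ω : K}
    (hω : IsPrimitiveRoot ω (p ^ (m + 1))) (v y : K) (hv : v ^ p ^ (m + 1) = 1)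
    (hy : y ∈ Submodule.span F {ξ : K | ξ ^ p ^ M = 1}) :
    v * y ∈ VV F p M (p ^ m * (p - 1)) ω (v ^ p ^ M) := by
  induction hy using Submodule.span_induction with
  | zero => rw [mul_zero]; exact zero_mem _
  | add x y _ _ hx hy => rw [mul_add]; exact add_mem hx hy
  | smul a x _ hx =>
    have : v * a • x = a • (v * x) := mul_smul_comm a v x
    rw [this]
    exact Submodule.smul_mem _ _ hx
  | mem ξ hξ =>
    have hξ' : ξ ^ p ^ M = 1 := hξ
    haveI : NeZero (p ^ (m + 1)) := ⟨pow_ne_zero _ hp.out.ne_zero⟩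
    have h1 : (v * ξ) ^ p ^ (m + 1) = 1 := by
      obtain ⟨e, he⟩ := Nat.exists_eq_add_of_le hMm
      rw [mul_pow, hv, one_mul, he, pow_add, pow_mul, hξ', one_pow]
    obtain ⟨s, hs, hs'⟩ := hω.eq_pow_of_pow_eq_one h1
    have hκ : (ω ^ s) ^ p ^ M = v ^ p ^ M := by rw [hs', mul_pow, hξ', mul_one]
    rw [← hs']
    by_cases hsd : s < p ^ m * (p - 1)
    · exact Submodule.subset_span ⟨s, hsd, hκ, rfl⟩
    push Not at hsd
    obtain ⟨r, rfl⟩ := Nat.exists_eq_add_of_le hsd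
    have hpp : p ^ m * (p - 1) + p ^ m = p ^ (m + 1) := by
      obtain ⟨q, hq⟩ := Nat.exists_eq_add_of_lt hp.out.one_lt
      have : p = (p - 1) + 1 := by omega
      conv_rhs => rw [pow_succ, this]
      rw [mul_add, mul_one, ← this]
    have hr : r < p ^ m := by omega
    have hη : IsPrimitiveRoot (ω ^ p ^ m) p :=
      hω.pow (pow_pos hp.out.pos _) (pow_succ p m)
    have hg := hη.geom_sum_eq_zero hp.out.one_lt
    have hp1 : p = (p - 1) + 1 := by have := hp.out.one_lt; omega
    rw [hp1, Finset.sum_range_succ, ← hp1] at hg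
    have h2 : ω ^ (p ^ m * (p - 1) + r) =
        - ∑ u ∈ Finset.range (p - 1), ω ^ (p ^ m * u + r) := by
      simp only [pow_add, pow_mul]
      rw [← Finset.sum_mul, ← neg_mul]
      congr 1
      exact eq_neg_of_add_eq_zero_right hg
    rw [h2]
    refine neg_mem (sum_mem fun u hu => Submodule.subset_span ⟨p ^ m * u + r, ?_, ?_, rfl⟩)
    · rw [Finset.mem_range] at hu
      calc p ^ m * u + r < p ^ m * u + p ^ m := by omega
        _ = p ^ m * (u + 1) := by ring
        _ ≤ _ := Nat.mul_le_mul_left _ hu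
    · rw [← hκ]
      obtain ⟨e, rfl⟩ := Nat.exists_eq_add_of_le hM
      have h3 : ∀ u : ℕ, (ω ^ (p ^ m * u + r)) ^ p ^ (1 + e) = (ω ^ r) ^ p ^ (1 + e) := by
        intro u
        have : ω ^ (p ^ m * u * p ^ (1 + e)) = 1 := by
          rw [show p ^ m * u * p ^ (1 + e) = p ^ (m + 1) * (u * p ^ e) by ring, pow_mul,
            hω.pow_eq_one, one_pow]
        rw [pow_add, mul_pow, ← pow_mul ω (p ^ m * u), this, one_mul]
      rw [h3, h3]

theorem ortho3 [IsAlgClosed K] [CompleteSpace K] (F : Subfield K)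
    (hF : ∀ x ∈ F, x ≠ 0 → ∃ z : ℤ, ‖x‖ = (p : ℝ) ^ z)
    (M m : ℕ) (hM : 1 ≤ M) (hMm : M ≤ m + 1) {ι : Type} [DecidableEq K] (I : Finset ι)
    (w y : ι → K) (hw : ∀ i ∈ I, w i ^ p ^ (m + 1) = 1)
    (hy : ∀ i ∈ I, y i ∈ Submodule.span F {ξ : K | ξ ^ p ^ M = 1}) (κ : K) :
    ‖∑ i ∈ I with w i ^ p ^ M = κ, w i * y i‖ ≤ p * ‖∑ i ∈ I, w i * y i‖ := by
  have hpK := pK_ne hpn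
  haveI : NeZero ((p ^ (m + 1) : ℕ) : K) := ⟨by push_cast; exact pow_ne_zero _ hpK⟩
  obtain ⟨ω, hω⟩ := HasEnoughRootsOfUnity.exists_primitiveRoot K (p ^ (m + 1))
  set d := p ^ m * (p - 1) with hd
  have hc : ∀ i, ∃ c : ℕ → F, i ∈ I → ((∀ t, c t ≠ 0 → (ω ^ t) ^ p ^ M = w i ^ p ^ M) ∧
      w i * y i = ∑ t ∈ Finset.range d, (c t : K) * ω ^ t) := by
    intro i
    by_cases hi : i ∈ I
    · obtain ⟨c, hc⟩ := VV_coeff hpn F M d ω _ _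
        (VV_mem hpn F M m hM hMm hω (w i) (y i) (hw i hi) (hy i hi))
      exact ⟨c, fun _ => hc⟩
    · exact ⟨0, fun h => absurd h hi⟩
  choose c hc using hc
  have hsum : ∀ J ⊆ I, ∑ i ∈ J, w i * y i =
      ∑ t ∈ Finset.range d, ((∑ i ∈ J, c i t : F) : K) * ω ^ t := by
    intro J hJ
    rw [Finset.sum_congr rfl fun i hi => (hc i (hJ hi)).2, Finset.sum_comm]
    refine Finset.sum_congr rfl fun t _ => ?_
    rw [AddSubmonoidClass.coe_finsetSum, Finset.sum_mul]
  have hb := ortho1 hpn F hF m hω (fun t => ∑ i ∈ I, c i t)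
  rw [← hd, ← hsum I subset_rfl] at hb
  rw [hsum _ (Finset.filter_subset _ _)]
  refine um_sum _ _ _ (by positivity) fun t ht => ?_
  rw [norm_mul, norm_pow, norm_root (pow_ne_zero _ hp.out.ne_zero) hω.pow_eq_one, one_pow, mul_one]
  by_cases hk : (ω ^ t) ^ p ^ M = κ
  · refine le_trans (le_of_eq ?_) (hb t (Finset.mem_range.1 ht))
    congr 2
    refine Finset.sum_subset (Finset.filter_subset _ _) fun i hi hi' => ?_
    by_contra h0
    apply hi'
    rw [Finset.mem_filter]
    exact ⟨hi, by rw [← (hc i hi).1 t h0, hk]⟩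
  · rw [Finset.sum_eq_zero]
    · simp; positivity
    · intro i hi
      rw [Finset.mem_filter] at hi
      by_contra h0
      exact hk (by rw [(hc i hi.1).1 t h0, hi.2])

end ortho

section final

theorem unif {α : Type*} [Finite α] (P : α → ℝ → Prop)
    (h : ∀ a, ∃ c : ℝ, 0 < c ∧ P a c) (mono : ∀ a c c', c' ≤ c → P a c → P a c') :
    ∃ c : ℝ, 0 < c ∧ ∀ a, P a c := by
  choose c hc0 hc using h
  rcases isEmpty_or_nonempty α with h | h
  · exact ⟨1, one_pos, fun j => (h.false j).elim⟩
  · obtain ⟨j0, hj0⟩ := Finite.exists_min c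
    exact ⟨c j0, hc0 j0, fun a => mono a _ _ (hj0 a) (hc a)⟩

theorem decomp {p : ℕ} [hp : Fact p.Prime] {K : Type u} [Field K] (ζ : K) (h : IsOfFinOrder ζ) :
    ∃ τ ω : K, ∃ e n N : ℕ, ζ = τ * ω ∧ ω ^ p ^ e = 1 ∧ 0 < n ∧ τ ^ p ^ n = τ ∧
      0 < N ∧ τ ^ N = 1 := by
  have hN : orderOf ζ ≠ 0 := h.orderOf_pos.ne'
  obtain ⟨e, N, hpN, hNe⟩ := Nat.exists_eq_pow_mul_and_not_dvd hN p hp.out.ne_one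
  have hN0 : 0 < N := Nat.pos_of_ne_zero fun h => hpN (h ▸ dvd_zero p)
  have hcop : Nat.Coprime p N := (Nat.Prime.coprime_iff_not_dvd hp.out).2 hpN
  have hcop2 : IsCoprime ((p ^ e : ℕ) : ℤ) (N : ℤ) :=
    Nat.isCoprime_iff_coprime.2 (hcop.pow_left e)
  obtain ⟨u, v, huv⟩ := hcop2
  have hz0 : ζ ≠ 0 := by
    rintro rfl
    have := pow_orderOf_eq_one (0 : K)
    rw [zero_pow hN] at this
    exact zero_ne_one this
  have hz1 : ∀ z : ℤ, ζ ^ (z * ((p ^ e : ℕ) : ℤ) * (N : ℤ)) = 1 := by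
    intro z
    rw [mul_assoc, mul_comm, zpow_mul, ← Nat.cast_mul, ← hNe, zpow_natCast, pow_orderOf_eq_one,
      one_zpow]
  have ht : (ζ ^ (u * ((p ^ e : ℕ) : ℤ))) ^ N = 1 := by
    rw [← zpow_natCast, ← zpow_mul, hz1]
  refine ⟨ζ ^ (u * ((p ^ e : ℕ) : ℤ)), ζ ^ (v * (N : ℤ)), e, N.totient, N, ?_, ?_,
    Nat.totient_pos.2 hN0, ?_, hN0, ht⟩
  · rw [← zpow_add₀ hz0, huv, zpow_one]
  · rw [← zpow_natCast, ← zpow_mul, mul_right_comm, hz1]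
  · have h1 := Nat.ModEq.pow_totient hcop
    have h2 : N ∣ p ^ N.totient - 1 :=
      (Nat.modEq_iff_dvd' (Nat.one_le_pow _ _ hp.out.pos)).1 h1.symm
    obtain ⟨k, hk⟩ := h2
    have h3 : p ^ N.totient = N * k + 1 := by
      have := Nat.one_le_pow N.totient p hp.out.pos
      omega
    rw [h3, pow_succ, pow_mul, ht, one_pow, one_mul]

theorem exists_D {p : ℕ} [hp : Fact p.Prime] {K : Type u} [Field K] (F : Subfield K) :
    ∃ D : Subfield K, (∀ x ∈ F, x ∈ D) ∧ (∀ (ξ : K) (M : ℕ), ξ ^ p ^ M = 1 → ξ ∈ D) ∧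
      ∀ x ∈ D, ∃ M : ℕ, ∀ M' ≥ M, x ∈ Submodule.span F {ξ : K | ξ ^ p ^ M' = 1} := by
  let S : Submonoid K :=
    { carrier := {ξ | ∃ M : ℕ, ξ ^ p ^ M = 1}
      one_mem' := ⟨0, one_pow _⟩
      mul_mem' := by
        rintro a b ⟨M, hM⟩ ⟨M', hM'⟩
        refine ⟨M + M', ?_⟩
        rw [mul_pow, pow_add, pow_mul, hM, one_pow, one_mul, mul_comm, pow_mul, hM', one_pow] }
  have hSalg : ∀ x ∈ (S : Set K), IsAlgebraic F x := by
    rintro x ⟨M, hM⟩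
    refine IsIntegral.isAlgebraic (IsIntegral.of_pow (pow_pos hp.out.pos M) ?_)
    rw [hM]; exact isIntegral_one
  refine ⟨(IntermediateField.adjoin F (S : Set K)).toSubfield, ?_, ?_, ?_⟩
  · intro x hx
    exact (IntermediateField.adjoin F (S : Set K)).algebraMap_mem ⟨x, hx⟩
  · intro ξ M h
    exact IntermediateField.subset_adjoin F (S : Set K) (show ξ ∈ S from ⟨M, h⟩)
  · intro x hx
    have h1 : x ∈ (IntermediateField.adjoin F (S : Set K)).toSubalgebra := hx
    rw [IntermediateField.adjoin_toSubalgebra_of_isAlgebraic hSalg,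
      ← Subalgebra.mem_toSubmodule, Algebra.adjoin_eq_span, Submonoid.closure_eq] at h1
    clear hx
    induction h1 using Submodule.span_induction with
    | zero => exact ⟨0, fun _ _ => zero_mem _⟩
    | add x y _ _ hx hy =>
      obtain ⟨M, h⟩ := hx
      obtain ⟨M', h'⟩ := hy
      exact ⟨max M M', fun N hN => add_mem (h N (le_of_max_le_left hN))
        (h' N (le_of_max_le_right hN))⟩
    | smul a x _ hx =>
      obtain ⟨M, h⟩ := hx
      exact ⟨M, fun N hN => Submodule.smul_mem _ _ (h N hN)⟩
    | mem x h =>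
      obtain ⟨M, hM⟩ := h
      refine ⟨M, fun N hN => Submodule.subset_span ?_⟩
      obtain ⟨k, rfl⟩ := Nat.exists_eq_add_of_le hN
      change x ^ p ^ (M + k) = 1
      rw [pow_add, pow_mul, hM, one_pow]

theorem pow_up {p : ℕ} {K : Type u} [Field K] {x : K} {M N : ℕ} (h : x ^ p ^ M = 1)
    (hN : M ≤ N) : x ^ p ^ N = 1 := by
  obtain ⟨k, rfl⟩ := Nat.exists_eq_add_of_le hN
  rw [pow_add, pow_mul, h, one_pow]

theorem core {p : ℕ} [hp : Fact p.Prime]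
    {K : Type u} [NontriviallyNormedField K] [IsUltrametricDist K] [IsAlgClosed K]
    [CompleteSpace K] (hpn : ‖(p : K)‖ = (p : ℝ)⁻¹) (F : Subfield K)
    (hF : ∀ x ∈ F, x ≠ 0 → ∃ z : ℤ, ‖x‖ = (p : ℝ) ^ z)
    (hF2 : ∀ ζ : K, (∃ n, 0 < n ∧ ζ ^ p ^ n = ζ) → ζ ∈ F)
    {ι : Type} [Fintype ι]
    (teich : ∀ a : ι → K, ∃ c : ℝ, 0 < c ∧ ∀ ζ : ι → K,
      (∀ i, ∃ n, 0 < n ∧ ζ i ^ p ^ n = ζ i) → (∑ i, ζ i * a i = 0 ∨ c ≤ ‖∑ i, ζ i * a i‖))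
    (D : Subfield K)
    (hD : ∀ x ∈ D, ∃ M : ℕ, ∀ M' ≥ M, x ∈ Submodule.span F {ξ : K | ξ ^ p ^ M' = 1})
    (a : ι → K) (ha : ∀ i, a i ∈ closure (D : Set K)) (I : Finset ι) :
    ∃ c : ℝ, 0 < c ∧ ∀ ζ : ι → K, (∀ i, IsOfFinOrder (ζ i)) →
      (∑ i ∈ I, ζ i * a i = 0 ∨ c ≤ ‖∑ i ∈ I, ζ i * a i‖) := by
  classical
  induction I using Finset.strongInduction with
  | H I ih =>
  rcases I.eq_empty_or_nonempty with rfl | ⟨i0, hi0⟩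
  · exact ⟨1, one_pos, fun ζ _ => Or.inl Finset.sum_empty⟩
  have hpr : (1 : ℝ) < p := by exact_mod_cast hp.out.one_lt
  -- uniform constant for proper subsets
  obtain ⟨c0, hc00, hc0⟩ := unif (α := Finset ι) (fun J c => J ⊂ I → ∀ ζ : ι → K,
      (∀ i, IsOfFinOrder (ζ i)) → (∑ i ∈ J, ζ i * a i = 0 ∨ c ≤ ‖∑ i ∈ J, ζ i * a i‖))
    (fun J => by
      by_cases hJ : J ⊂ I
      · obtain ⟨c, hc, h⟩ := ih J hJ
        exact ⟨c, hc, fun _ => h⟩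
      · exact ⟨1, one_pos, fun h => absurd h hJ⟩)
    (fun J c c' hcc h hJ ζ hζ => (h hJ ζ hζ).imp id hcc.trans)
  set ε : ℝ := c0 / (4 * p) with hε
  have hε0 : 0 < ε := by positivity
  -- approximations
  have happ : ∀ i, ∃ b : K, b ∈ D ∧ ‖a i - b‖ < ε := by
    intro i
    obtain ⟨b, hb, hb'⟩ := Metric.mem_closure_iff.1 (ha i) ε hε0
    exact ⟨b, hb, by rwa [← dist_eq_norm]⟩
  choose b hbD hb using happ
  have hM : ∃ M : ℕ, 1 ≤ M ∧ ∀ i, b i ∈ Submodule.span F {ξ : K | ξ ^ p ^ M = 1} := by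
    choose M hM using fun i => hD (b i) (hbD i)
    exact ⟨1 + ∑ i, M i, by omega, fun i => hM i _ (by
      have := Finset.single_le_sum (f := M) (fun _ _ => Nat.zero_le _) (Finset.mem_univ i)
      omega)⟩
  obtain ⟨M, hM1, hbM⟩ := hM
  have hpM : 0 < p ^ M := pow_pos hp.out.pos M
  -- the single cluster constant
  obtain ⟨c1, hc10, hc1⟩ := unif (α := ι → {x // x ∈ Polynomial.nthRootsFinset (p ^ M) (1 : K)})
    (fun η c => ∀ ζ : ι → K, (∀ i, ∃ n, 0 < n ∧ ζ i ^ p ^ n = ζ i) →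
      (∑ i, ζ i * (if i ∈ I then (η i : K) * a i else 0) = 0 ∨
        c ≤ ‖∑ i, ζ i * (if i ∈ I then (η i : K) * a i else 0)‖))
    (fun η => teich _)
    (fun η c c' hcc h ζ hζ => (h ζ hζ).imp id hcc.trans)
  refine ⟨min c1 (c0 / (2 * p)), lt_min hc10 (by positivity), fun ζ hζ => ?_⟩
  choose τ ω e n N hτω hω hn hτ hN hτN using fun i => decomp (p := p) (ζ i) (hζ i)
  have hτ1 : ∀ i, ‖τ i‖ = 1 := fun i => norm_root (hN i).ne' (hτN i)
  have hω1 : ∀ i, ‖ω i‖ = 1 := fun i => norm_root (pow_ne_zero _ hp.out.ne_zero) (hω i)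
  have hω0 : ∀ i, ω i ≠ 0 := fun i => norm_ne_zero_iff.1 (by rw [hω1]; exact one_ne_zero)
  have hζ1 : ∀ i, ‖ζ i‖ = 1 := fun i => by rw [hτω i, norm_mul, hτ1, hω1, one_mul]
  by_cases hcase : ∀ i ∈ I, ω i ^ p ^ M = ω i0 ^ p ^ M
  · -- one cluster
    let η : ι → {x // x ∈ Polynomial.nthRootsFinset (p ^ M) (1 : K)} := fun i =>
      if h : i ∈ I then ⟨ω i / ω i0, by
        rw [Polynomial.mem_nthRootsFinset hpM, div_pow, hcase i h,
          div_self (pow_ne_zero _ (hω0 i0))]⟩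
      else ⟨1, by rw [Polynomial.mem_nthRootsFinset hpM, one_pow]⟩
    have h1 := hc1 η τ (fun i => ⟨n i, hn i, hτ i⟩)
    have h2 : ∑ i ∈ I, ζ i * a i =
        ω i0 * ∑ i, τ i * (if i ∈ I then (η i : K) * a i else 0) := by
      rw [Finset.mul_sum, ← Finset.sum_subset (Finset.subset_univ I)]
      · refine Finset.sum_congr rfl fun i hi => ?_
        have : (η i : K) = ω i / ω i0 := by simp only [η, dif_pos hi]
        rw [if_pos hi, this, hτω i]
        field_simp [hω0 i0]
      · intro i _ hi
        rw [if_neg hi, mul_zero, mul_zero]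
    rw [h2, norm_mul, hω1, one_mul]
    rcases h1 with h1 | h1
    · left; rw [h1, mul_zero]
    · right; exact (min_le_left _ _).trans h1
  · push Not at hcase
    obtain ⟨i1, hi1, hne⟩ := hcase
    rw [or_iff_not_imp_left]
    intro hS
    refine (min_le_right _ _).trans ?_
    have hclus : ∀ κ : K, {i ∈ I | ω i ^ p ^ M = κ} ⊂ I := by
      intro κ
      rw [Finset.filter_ssubset]
      by_cases h : ω i0 ^ p ^ M = κ
      · exact ⟨i1, hi1, h ▸ hne⟩
      · exact ⟨i0, hi0, h⟩
    obtain ⟨κ, hκ⟩ : ∃ κ : K, ∑ i ∈ I with ω i ^ p ^ M = κ, ζ i * a i ≠ 0 := by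
      by_contra hall
      push Not at hall
      apply hS
      rw [← Finset.sum_fiberwise_of_maps_to (s := I) (t := I.image fun i => ω i ^ p ^ M)
        (g := fun i => ω i ^ p ^ M) (fun i hi => Finset.mem_image_of_mem _ hi)]
      exact Finset.sum_eq_zero fun κ _ => hall κ
    have hlow := (hc0 _ (hclus κ) ζ hζ).resolve_left hκ
    have hdiff : ∀ J : Finset ι, ‖∑ i ∈ J, ζ i * a i - ∑ i ∈ J, ω i * (τ i * b i)‖ ≤ ε := by
      intro J
      rw [← Finset.sum_sub_distrib]
      refine um_sum _ _ _ hε0.le fun i _ => ?_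
      have : ζ i * a i - ω i * (τ i * b i) = ζ i * (a i - b i) := by rw [hτω i]; ring
      rw [this, norm_mul, hζ1, one_mul]
      exact (hb i).le
    let m := M + ∑ i, e i
    have ho := ortho3 hpn F hF M m hM1 (by omega) I ω (fun i => τ i * b i)
      (fun i _ => pow_up (hω i) (by
        have := Finset.single_le_sum (f := e) (fun _ _ => Nat.zero_le _) (Finset.mem_univ i)
        omega))
      (fun i _ => Submodule.smul_mem _ (⟨τ i, hF2 _ ⟨n i, hn i, hτ i⟩⟩ : F) (hbM i)) κ
    have hd1 := hdiff {i ∈ I | ω i ^ p ^ M = κ}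
    have hd2 := hdiff I
    have e1 := norm_sub_norm_le (∑ i ∈ I with ω i ^ p ^ M = κ, ζ i * a i)
      (∑ i ∈ I with ω i ^ p ^ M = κ, ω i * (τ i * b i))
    have e2 := norm_sub_norm_le (∑ i ∈ I, ω i * (τ i * b i)) (∑ i ∈ I, ζ i * a i)
    rw [norm_sub_rev] at e2
    generalize ‖∑ i ∈ I, ζ i * a i‖ = s at *
    generalize ‖∑ i ∈ I, ω i * (τ i * b i)‖ = s' at *
    have h4 : c0 - ε ≤ p * (s + ε) := by
      have : (p : ℝ) * s' ≤ p * (s + ε) := mul_le_mul_of_nonneg_left (by linarith) (by linarith)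
      linarith
    have h5 : p * ε = c0 / 4 := by rw [hε]; field_simp
    have h6 : ε ≤ p * ε := le_mul_of_one_le_left hε0.le hpr.le
    rw [div_le_iff₀ (by positivity)]
    nlinarith

theorem main {p : ℕ} [hp : Fact p.Prime]
    {K : Type u} [NontriviallyNormedField K] [IsUltrametricDist K] [IsAlgClosed K]
    [CompleteSpace K] (hpn : ‖(p : K)‖ = (p : ℝ)⁻¹) {ι : Type} [Fintype ι] (a : ι → K) :
    ∃ c : ℝ, 0 < c ∧ ∀ ζ : ι → K, (∀ i, IsOfFinOrder (ζ i)) →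
      (∑ i, ζ i * a i = 0 ∨ c ≤ ‖∑ i, ζ i * a i‖) := by
  obtain ⟨F, hFc, hF, hF2, hF3⟩ := exists_F (K := K) hpn
  have teich := descend hpn F hFc (ι := ι) {ζ | ∀ i, ∃ n, 0 < n ∧ ζ i ^ p ^ n = ζ i}
    (fun ζ h i => hF2 _ (h i)) (fun a ha => hF3 ι a ha)
  obtain ⟨D, hDF, hDr, hD⟩ := exists_D (p := p) F
  refine descend hpn D.topologicalClosure D.isClosed_topologicalClosure
    {ζ | ∀ i, IsOfFinOrder (ζ i)} ?_ ?_ a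
  · intro ζ h i
    obtain ⟨τ, ω, e, n, N, h1, h2, h3, h4, -, -⟩ := decomp (p := p) (ζ i) (h i)
    apply D.le_topologicalClosure
    rw [h1]
    exact mul_mem (hDF _ (hF2 _ ⟨n, h3, h4⟩)) (hDr _ _ h2)
  · intro a ha
    exact core hpn F hF hF2 teich D hD a ha Finset.univ

end final

end TV

/-- Tate–Voloch: for every `n ≥ 1` and `a₁,…,a_n ∈ ℂ_p` there is `c > 0` such that for
all roots of unity `ζ₁,…,ζ_n` in `ℂ_p`, either `Σ ζᵢaᵢ = 0` or `|Σ ζᵢaᵢ|_p ≥ c`. -/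
theorem stmt10 {p : ℕ} (hp : p.Prime)
    {K : Type*} [NontriviallyNormedField K] [IsUltrametricDist K] [IsAlgClosed K]
    [CompleteSpace K] (hpnorm : ‖(p : K)‖ = (p : ℝ)⁻¹)
    (n : ℕ) (a : Fin n → K) :
    ∃ c : ℝ, 0 < c ∧ ∀ ζ : Fin n → K, (∀ i, IsOfFinOrder (ζ i)) →
      (∑ i, ζ i * a i = 0 ∨ c ≤ ‖∑ i, ζ i * a i‖) := by 
  haveI : Fact p.Prime := ⟨hp⟩
  exact TV.main hpnorm a
end

section
/- Let p be a prime and F ∈ ℂ_p[X₁,…,X_n] a nonzero polynomial. Then inf(F) = inf{|F(ζ)|_p : ζ ∈ (μ_∞)^n with F(ζ) ≠ 0} is strictly positive, and setting c(F) = -log(inf(F)/|F|_p) we have c(F) ≥ 0. -/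
/-- The `p`-adic Gauss norm of a multivariate polynomial. -/
noncomputable def mvGaussNorm {K : Type*} [NontriviallyNormedField K] {n : ℕ}
    (F : MvPolynomial (Fin n) K) : ℝ :=
  ((F.support.sup fun d => ‖F.coeff d‖₊ : NNReal) : ℝ)

/-- `inf(F)`: the infimum of `|F(ζ)|_p` over torsion points `ζ ∈ (μ_∞)^n` with
`F(ζ) ≠ 0`. -/
noncomputable def infMv {K : Type*} [NontriviallyNormedField K] {n : ℕ}
    (F : MvPolynomial (Fin n) K) : ℝ :=
  sInf {r : ℝ | ∃ ζ : Fin n → Kˣ, (∀ i, IsOfFinOrder (ζ i)) ∧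
    MvPolynomial.eval (fun i => (ζ i : K)) F ≠ 0 ∧
    r = ‖MvPolynomial.eval (fun i => (ζ i : K)) F‖}


theorem witt_noeth {p : ℕ} [Fact p.Prime] {k : Type*} [Field k] [CharP k p]
    {ι : Type*} [Fintype ι] (c : ι → WittVector p k) :
    ∃ M : ℕ, ∀ x : ι → k,
      (∀ m < M, (∑ i, c i * WittVector.teichmuller p (x i)).coeff m = 0) →
      ∑ i, c i * WittVector.teichmuller p (x i) = 0 := by
  classical
  let R := MvPolynomial ι k
  let P : WittVector p R := ∑ i, WittVector.map (MvPolynomial.C : k →+* R) (c i) *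
    WittVector.teichmuller p (MvPolynomial.X i : R)
  have key : ∀ (x : ι → k) (m : ℕ),
      (∑ i, c i * WittVector.teichmuller p (x i)).coeff m = MvPolynomial.eval x (P.coeff m) := by
    intro x m
    rw [← WittVector.map_coeff]
    congr 1
    simp only [P, map_sum, map_mul, WittVector.map_teichmuller, MvPolynomial.eval_X]
    refine Finset.sum_congr rfl fun i _ => ?_
    congr 1
    ext j
    simp [WittVector.map_coeff]
  let I : ℕ →o Ideal R :=
    ⟨fun M => Ideal.span ((fun m => P.coeff m) '' {m | m < M}), fun a b h => by
      apply Ideal.span_mono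
      apply Set.image_mono
      intro m hm
      exact lt_of_lt_of_le hm h⟩
  obtain ⟨M, hM⟩ := monotone_stabilizes_iff_noetherian.mpr (inferInstance : IsNoetherian R R) I
  refine ⟨M, fun x hx => ?_⟩
  have hle : I M ≤ RingHom.ker (MvPolynomial.eval x) := by
    refine Ideal.span_le.mpr ?_
    rintro _ ⟨m, hm, rfl⟩
    simp only [SetLike.mem_coe, RingHom.mem_ker]
    rw [← key]
    exact hx m hm
  ext m
  rw [key, WittVector.zero_coeff]
  have : P.coeff m ∈ I (max M (m+1)) := by
    apply Ideal.subset_span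
    exact ⟨m, by simp, rfl⟩
  rw [← hM _ (le_max_left _ _)] at this
  exact hle this

theorem coef_reduction {L K : Type*} [NontriviallyNormedField L] [CompleteSpace L]
    [NormedField K] [NormedAlgebra L K] {ι : Type*} [Fintype ι] (S : Set (ι → L))
    (H : ∀ c : ι → L, ∃ δ > 0, ∀ x ∈ S, ∑ i, c i * x i = 0 ∨ δ ≤ ‖∑ i, c i * x i‖)
    (a : ι → K) :
    ∃ δ > 0, ∀ x ∈ S, ∑ i, a i * algebraMap L K (x i) = 0 ∨
      δ ≤ ‖∑ i, a i * algebraMap L K (x i)‖ := by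
  classical
  let V := Submodule.span L (Set.range a)
  haveI : FiniteDimensional L V := FiniteDimensional.span_of_finite L (Set.finite_range a)
  let b := Module.finBasis L V
  let a' : ι → V := fun i => ⟨a i, Submodule.subset_span ⟨i, rfl⟩⟩
  choose δ hδ H using fun j => H (fun i => b.coord j (a' i))
  let f : Fin (Module.finrank L V) → (V →L[L] L) := fun j => (b.coord j).toContinuousLinearMap
  have hfin : ∃ ε > 0, ∀ j, ε ≤ δ j / (‖f j‖ + 1) := by
    have hpos : ∀ j, 0 < δ j / (‖f j‖ + 1) := fun j => div_pos (hδ j) (by positivity)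
    rcases isEmpty_or_nonempty (Fin (Module.finrank L V)) with h | h
    · exact ⟨1, one_pos, fun j => (h.false j).elim⟩
    · obtain ⟨j, hj⟩ := Finite.exists_min (fun j => δ j / (‖f j‖ + 1))
      exact ⟨_, hpos j, hj⟩
  obtain ⟨ε, hε, hle⟩ := hfin
  refine ⟨ε, hε, fun x hx => ?_⟩
  let v : V := ∑ i, x i • a' i
  have hv : ∑ i, a i * algebraMap L K (x i) = (v : K) := by
    simp [v, a', Algebra.smul_def, mul_comm]
  rw [hv]
  by_cases h0 : v = 0
  · left; simp [h0]
  right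
  have : ∃ j, b.coord j v ≠ 0 := by
    by_contra! hc
    exact h0 (b.forall_coord_eq_zero_iff.mp hc)
  obtain ⟨j, hj⟩ := this
  have hc : b.coord j v = ∑ i, b.coord j (a' i) * x i := by
    simp only [v, map_sum, map_smul, smul_eq_mul, mul_comm]
  have h1 : δ j ≤ ‖b.coord j v‖ := by
    rcases H j x hx with h | h
    · exact absurd (hc.trans h) hj
    · rw [hc]; exact h
  have h2 : ‖b.coord j v‖ ≤ ‖f j‖ * ‖v‖ := (f j).le_opNorm v
  have h3 : δ j ≤ (‖f j‖ + 1) * ‖v‖ := by nlinarith [norm_nonneg v]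
  refine (hle j).trans ?_
  rw [div_le_iff₀ (by positivity)]
  rw [mul_comm] at h3
  exact h3

theorem conj_norm {L K : Type*} [NontriviallyNormedField L] [CompleteSpace L]
    [IsUltrametricDist L] [NormedField K] [NormedAlgebra L K] {x y : K} (hx : IsAlgebraic L x)
    (hxy : minpoly L x = minpoly L y) : ‖x‖ = ‖y‖ := by
  have hy : IsAlgebraic L y := by
    rw [isAlgebraic_iff_isIntegral] at hx ⊢
    by_contra h
    rw [minpoly.eq_zero h] at hxy
    exact minpoly.ne_zero hx hxy
  let A := algebraicClosure L K
  have key : ∀ z : A, ‖(z : K)‖ = spectralValue (minpoly L (z : K)) := by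
    intro z
    have h := NormedAlgebra.norm_eq_spectralNorm L z
    rw [spectralNorm, ← minpoly.algebraMap_eq (algebraMap A K).injective z] at h
    exact h
  have h1 := key ⟨x, mem_algebraicClosure_iff.mpr hx⟩
  have h2 := key ⟨y, mem_algebraicClosure_iff.mpr hy⟩
  simp only at h1 h2
  rw [h1, h2, hxy]

theorem conj_aeval_norm {L K : Type*} [NontriviallyNormedField L] [CompleteSpace L]
    [IsUltrametricDist L] [NormedField K] [NormedAlgebra L K] (M : IntermediateField L K)
    [Algebra.IsAlgebraic L M] {x y : K} (hx : IsAlgebraic L x)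
    (hxy : Polynomial.aeval y (minpoly M x) = 0) (P : Polynomial M) :
    ‖Polynomial.aeval x P‖ = ‖Polynomial.aeval y P‖ := by
  have hM : ∀ m : M, (m : K) ∈ algebraicClosure L K := fun m => by
    rw [mem_algebraicClosure_iff]
    exact (Algebra.IsAlgebraic.isAlgebraic (R := L) m).algebraMap
  have halg : IsAlgebraic L (Polynomial.aeval x P) := by
    rw [← mem_algebraicClosure_iff, Polynomial.aeval_eq_sum_range]
    refine sum_mem fun i _ => ?_
    rw [Algebra.smul_def]
    exact mul_mem (hM _) (pow_mem (mem_algebraicClosure_iff.mpr hx) _)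
  apply conj_norm halg
  have hIntg := isAlgebraic_iff_isIntegral.mp halg
  refine minpoly.eq_of_irreducible_of_monic (minpoly.irreducible hIntg) ?_ (minpoly.monic hIntg)
  set g := minpoly L (Polynomial.aeval x P)
  have e : ∀ z : K, Polynomial.aeval (Polynomial.aeval z P) g =
      Polynomial.aeval z ((g.map (algebraMap L M)).comp P) := by
    intro z
    rw [Polynomial.aeval_comp, Polynomial.aeval_map_algebraMap]
  rw [e]
  have h0 : Polynomial.aeval x ((g.map (algebraMap L M)).comp P) = 0 := by
    rw [← e]; exact minpoly.aeval _ _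
  obtain ⟨q, hq⟩ := minpoly.dvd M x h0
  rw [hq, map_mul, hxy, zero_mul]

theorem eigen_bound {L K : Type*} [NontriviallyNormedField L] [CompleteSpace L]
    [IsUltrametricDist L] [NormedField K] [NormedAlgebra L K] [IsUltrametricDist K]
    {p : ℕ} (hp : p.Prime) (hpn : ‖(p : K)‖ = (p : ℝ)⁻¹) (M : IntermediateField L K)
    [Algebra.IsAlgebraic L M] {η : K} (hη : IsAlgebraic L η) (hηp : η ^ p ∈ M)
    (hdeg : (minpoly M η).natDegree = p) {ξ : K} (hξ : IsPrimitiveRoot ξ p)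
    (y : ℕ → K) (hy : ∀ j, y j ∈ M) (j : ℕ) (hj : j < p) :
    ‖y j * η ^ j‖ ≤ p * ‖∑ i ∈ Finset.range p, y i * η ^ i‖ := by
  have hintM : IsIntegral M η := (isAlgebraic_iff_isIntegral.mp hη).tower_top
  have hmin : minpoly M η = Polynomial.X ^ p - Polynomial.C (⟨η ^ p, hηp⟩ : M) := by
    symm
    apply Polynomial.eq_of_monic_of_dvd_of_natDegree_le (minpoly.monic hintM)
      (Polynomial.monic_X_pow_sub_C _ hp.ne_zero)
    · apply minpoly.dvd
      simp only [map_sub, map_pow, Polynomial.aeval_X, Polynomial.aeval_C]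
      exact sub_eq_zero.mpr rfl
    · rw [Polynomial.natDegree_X_pow_sub_C, hdeg]
  let P : Polynomial M := ∑ i ∈ Finset.range p,
    Polynomial.C (⟨y i, hy i⟩ : M) * Polynomial.X ^ i
  have hP : ∀ z : K, Polynomial.aeval z P = ∑ i ∈ Finset.range p, y i * z ^ i := by
    intro z
    simp only [P, map_sum, map_mul, map_pow, Polynomial.aeval_X, Polynomial.aeval_C]
    rfl
  have hconj : ∀ t : ℕ, ‖∑ i ∈ Finset.range p, y i * (ξ ^ t * η) ^ i‖ =
      ‖∑ i ∈ Finset.range p, y i * η ^ i‖ := by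
    intro t
    rw [← hP, ← hP]
    symm
    apply conj_aeval_norm M hη
    rw [hmin]
    simp only [map_sub, map_pow, Polynomial.aeval_X, Polynomial.aeval_C]
    rw [mul_pow, ← pow_mul, mul_comm t p, pow_mul, hξ.pow_eq_one, one_pow, one_mul]
    exact sub_eq_zero.mpr rfl
  have hξ0 : ξ ≠ 0 := hξ.ne_zero hp.ne_zero
  have hsum : ∑ t ∈ Finset.range p, (ξ ^ (t * j))⁻¹ * ∑ i ∈ Finset.range p, y i * (ξ ^ t * η) ^ i =
      p * (y j * η ^ j) := by
    simp_rw [Finset.mul_sum]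
    rw [Finset.sum_comm]
    rw [Finset.sum_eq_single j]
    · have : ∀ t ∈ Finset.range p, (ξ ^ (t * j))⁻¹ * (y j * (ξ ^ t * η) ^ j) = y j * η ^ j := by
        intro t _
        rw [mul_pow, ← pow_mul]
        field_simp
      rw [Finset.sum_congr rfl this]
      simp
    · intro i hi hij
      have hi' := Finset.mem_range.mp hi
      set w : K := ξ ^ i * (ξ ^ j)⁻¹ with hw
      have hw1 : w ≠ 1 := by
        intro h
        have : ξ ^ i = ξ ^ j := by
          rw [hw] at h
          field_simp at h
          exact h
        exact hij (hξ.pow_inj hi' hj this)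
      have hwp : w ^ p = 1 := by
        rw [hw, mul_pow, inv_pow, ← pow_mul, ← pow_mul, mul_comm i, mul_comm j, pow_mul, pow_mul,
          hξ.pow_eq_one]
        simp
      have : ∀ t ∈ Finset.range p, (ξ ^ (t * j))⁻¹ * (y i * (ξ ^ t * η) ^ i) =
          (y i * η ^ i) * w ^ t := by
        intro t _
        rw [hw, mul_pow, mul_pow, inv_pow, ← pow_mul, ← pow_mul, ← pow_mul, mul_comm t i,
          mul_comm t j]
        ring
      rw [Finset.sum_congr rfl this, ← Finset.mul_sum]
      have hg := geom_sum_mul w p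
      rw [hwp, sub_self] at hg
      rcases mul_eq_zero.mp hg with h | h
      · rw [h, mul_zero]
      · exact absurd (sub_eq_zero.mp h) hw1
    · intro h
      exact absurd (Finset.mem_range.mpr hj) h
  have hξn : ‖ξ‖ = 1 := by
    have : ‖ξ‖ ^ p = 1 := by rw [← norm_pow, hξ.pow_eq_one, norm_one]
    exact (pow_eq_one_iff_of_nonneg (norm_nonneg _) hp.ne_zero).mp this
  have hb : ‖(p : K) * (y j * η ^ j)‖ ≤ ‖∑ i ∈ Finset.range p, y i * η ^ i‖ := by
    rw [← hsum]
    apply IsUltrametricDist.norm_sum_le_of_forall_le_of_nonneg (norm_nonneg _)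
    intro t _
    rw [norm_mul, hconj, norm_inv, norm_pow, hξn]
    simp
  rw [norm_mul, hpn] at hb
  have hp0 : (0 : ℝ) < p := by exact_mod_cast hp.pos
  rwa [inv_mul_le_iff₀ hp0] at hb

open IntermediateField in
theorem degree_stab {L K : Type*} [Field L] [Field K] [Algebra L K] {p : ℕ} (hp : p.Prime)
    (hprim : ∀ m : ℕ, ∃ η : K, IsPrimitiveRoot η (p ^ m))
    (hcyc : ∀ m : ℕ, ∀ η : K, IsPrimitiveRoot η (p ^ (m + 1)) →
      (minpoly L η).natDegree = Nat.totient (p ^ (m + 1)))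
    (A : Set K) (hAf : A.Finite) (hA : ∀ x ∈ A, IsAlgebraic L x) :
    ∃ r : ℕ, ∀ m ≥ r, ∀ η : K, IsPrimitiveRoot η (p ^ (m + 1)) →
      (minpoly (adjoin L (A ∪ {x | x ^ p ^ m = 1})) η).natDegree = p := by
  classical
  set E : ℕ → IntermediateField L K := fun m => adjoin L (A ∪ {x | x ^ p ^ m = 1}) with hE
  have hIntg : ∀ m, ∀ x ∈ {x : K | x ^ p ^ m = 1}, IsIntegral L x := by
    intro m x hx
    refine ⟨Polynomial.X ^ (p ^ m) - 1, Polynomial.monic_X_pow_sub_C _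
      (pow_ne_zero _ hp.ne_zero), ?_⟩
    simp only [Set.mem_ofPred_eq] at hx
    simp [hx]
  have hfinset : ∀ m, {x : K | x ^ p ^ m = 1}.Finite := by
    intro m
    have hpos : 0 < p ^ m := pow_pos hp.pos _
    refine (Polynomial.nthRoots (p ^ m) (1 : K)).toFinset.finite_toSet.subset ?_
    intro x hx
    simp only [Finset.mem_coe, Multiset.mem_toFinset]
    exact (Polynomial.mem_nthRoots hpos).mpr hx
  have hfin : ∀ m, FiniteDimensional L (E m) := by
    intro m
    have : Finite ↑(A ∪ {x : K | x ^ p ^ m = 1}) := (hAf.union (hfinset m)).to_subtype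
    apply finiteDimensional_adjoin
    rintro x (hx | hx)
    · exact isAlgebraic_iff_isIntegral.mp (hA x hx)
    · exact hIntg m x hx
  have hpow : ∀ (m : ℕ) (η : K), IsPrimitiveRoot η (p ^ m) → ∀ x : K, x ^ p ^ m = 1 →
      ∃ i, η ^ i = x := by
    intro m η hη x hx
    have : NeZero (p ^ m) := ⟨pow_ne_zero _ hp.ne_zero⟩
    obtain ⟨i, _, hi⟩ := hη.eq_pow_of_pow_eq_one hx
    exact ⟨i, hi⟩
  have hstep : ∀ (m : ℕ) (η : K), IsPrimitiveRoot η (p ^ (m + 1)) →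
      restrictScalars L (adjoin (E m) {η}) = E (m + 1) := by
    intro m η hη
    rw [hE, adjoin_adjoin_left]
    apply le_antisymm
    · rw [adjoin_le_iff]
      rintro x ((hx | hx) | hx)
      · exact subset_adjoin _ _ (Or.inl hx)
      · refine subset_adjoin _ _ (Or.inr ?_)
        simp only [Set.mem_ofPred_eq] at hx ⊢
        rw [pow_succ, pow_mul, hx, one_pow]
      · rw [Set.mem_singleton_iff] at hx
        rw [hx]
        exact subset_adjoin _ _ (Or.inr hη.pow_eq_one)
    · rw [adjoin_le_iff]
      rintro x (hx | hx)
      · exact subset_adjoin _ _ (Or.inl (Or.inl hx))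
      · obtain ⟨i, rfl⟩ := hpow _ _ hη x hx
        have h0 : η ∈ adjoin L ((A ∪ {x | x ^ p ^ m = 1}) ∪ {η}) :=
          subset_adjoin _ _ (Or.inr (Set.mem_singleton η))
        exact pow_mem h0 i
  have hDstep : ∀ (m : ℕ) (η : K), IsPrimitiveRoot η (p ^ (m + 1)) →
      Module.finrank L (E (m + 1)) = Module.finrank L (E m) * (minpoly (E m) η).natDegree := by
    intro m η hη
    have h1 := Module.finrank_mul_finrank L (E m) (adjoin (E m) {η})
    rw [adjoin.finrank ((hIntg _ η hη.pow_eq_one).tower_top)] at h1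
    rw [h1, ← hstep m η hη]
    rfl
  have hle : ∀ (m : ℕ) (η : K), IsPrimitiveRoot η (p ^ (m + 1)) →
      (minpoly (E m) η).natDegree ≤ p := by
    intro m η hη
    have hmem : η ^ p ∈ E m := by
      refine subset_adjoin _ _ (Or.inr ?_)
      simp only [Set.mem_ofPred_eq]
      rw [← pow_mul, ← pow_succ', hη.pow_eq_one]
    have hd : minpoly (E m) η ∣ Polynomial.X ^ p - Polynomial.C (⟨η ^ p, hmem⟩ : E m) := by
      apply minpoly.dvd
      simp only [map_sub, map_pow, Polynomial.aeval_X, Polynomial.aeval_C]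
      exact sub_eq_zero.mpr rfl
    have := Polynomial.natDegree_le_of_dvd hd
      (Polynomial.monic_X_pow_sub_C _ hp.ne_zero).ne_zero
    rwa [Polynomial.natDegree_X_pow_sub_C] at this
  have hdvd : ∀ m : ℕ, Nat.totient (p ^ (m + 1)) ∣ Module.finrank L (E (m + 1)) := by
    intro m
    obtain ⟨η, hη⟩ := hprim (m + 1)
    have hmem : η ∈ E (m + 1) := subset_adjoin _ _ (Or.inr hη.pow_eq_one)
    rw [← hcyc m η hη]
    have := hfin (m + 1)
    have h := minpoly.degree_dvd (K := L) (L := E (m + 1)) (x := ⟨η, hmem⟩)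
      (Algebra.IsIntegral.isIntegral _)
    rwa [← minpoly.algebraMap_eq (algebraMap (E (m+1)) K).injective] at h
  choose Q hQ using hdvd
  have htot : ∀ m, Nat.totient (p ^ (m + 2)) = p * Nat.totient (p ^ (m + 1)) := by
    intro m
    rw [Nat.totient_prime_pow_succ hp, Nat.totient_prime_pow_succ hp, pow_succ]
    ring
  have htpos : ∀ m, 0 < Nat.totient (p ^ (m + 1)) := fun m =>
    Nat.totient_pos.mpr (pow_pos hp.pos _)
  have hrel : ∀ (m : ℕ) (η : K), IsPrimitiveRoot η (p ^ (m + 2)) →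
      p * Q (m + 1) = Q m * (minpoly (E (m + 1)) η).natDegree := by
    intro m η hη
    have h := hDstep (m + 1) η hη
    rw [hQ (m + 1), hQ m, htot] at h
    have h' : Nat.totient (p ^ (m + 1)) * (p * Q (m + 1)) =
      Nat.totient (p ^ (m + 1)) * (Q m * (minpoly (E (m + 1)) η).natDegree) := by
      rw [← mul_assoc, ← mul_assoc, ← h]; ring
    exact Nat.eq_of_mul_eq_mul_left (htpos m) h'
  have hanti : Antitone Q := by
    apply antitone_nat_of_succ_le
    intro m
    obtain ⟨η, hη⟩ := hprim (m + 2)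
    have h := hrel m η hη
    have h2 := hle (m + 1) η hη
    have : p * Q (m + 1) ≤ p * Q m := by rw [h, mul_comm p]; gcongr
    exact Nat.le_of_mul_le_mul_left this hp.pos
  have hstab : ∃ r, ∀ m ≥ r, Q m = Q r := by
    obtain ⟨r, hr⟩ : ∃ r, ∀ m, Q r ≤ Q m := by
      obtain ⟨r, hr⟩ := WellFounded.has_min (wellFounded_lt (α := ℕ)) (Set.range Q)
        ⟨_, ⟨0, rfl⟩⟩
      obtain ⟨⟨r, rfl⟩, hr⟩ := hr
      exact ⟨r, fun m => not_lt.mp (hr (Q m) ⟨m, rfl⟩)⟩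
    exact ⟨r, fun m hm => le_antisymm (hanti hm) (hr m)⟩
  obtain ⟨r, hr⟩ := hstab
  refine ⟨r + 1, fun m hm η hη => ?_⟩
  obtain ⟨m, rfl⟩ : ∃ m', m = m' + 1 := ⟨m - 1, by omega⟩
  have h := hrel m η hη
  rw [hr m (by omega), hr (m + 1) (by omega), mul_comm] at h
  have hQpos : 0 < Q r := by
    rcases Nat.eq_zero_or_pos (Q r) with h0 | h0
    · have h1 := hQ r
      rw [h0, mul_zero] at h1
      have := hfin (r + 1)
      exact absurd h1 (Module.finrank_pos (R := L) (M := E (r + 1))).ne'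
    · exact h0
  exact (Nat.eq_of_mul_eq_mul_left hQpos h).symm

theorem finite_min_pos {α : Type*} {S : Set α} (hS : S.Finite) (P : α → ℝ → Prop)
    (mono : ∀ x δ δ', P x δ → δ' ≤ δ → P x δ') (h : ∀ x ∈ S, ∃ δ > 0, P x δ) :
    ∃ δ > 0, ∀ x ∈ S, P x δ := by
  induction S, hS using Set.Finite.induction_on with
  | empty => exact ⟨1, one_pos, by simp⟩
  | @insert a S _ _ ih =>
    obtain ⟨δ, hδ, H⟩ := ih fun x hx => h x (Set.mem_insert_of_mem _ hx)
    obtain ⟨δ', hδ', H'⟩ := h a (Set.mem_insert _ _)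
    refine ⟨min δ δ', lt_min hδ hδ', ?_⟩
    rintro x (rfl | hx)
    · exact mono _ _ _ H' (min_le_right _ _)
    · exact mono _ _ _ (H x hx) (min_le_left _ _)

theorem tv_algebraic {L K ι : Type*} [NontriviallyNormedField L] [CompleteSpace L]
    [IsUltrametricDist L] [NormedField K] [NormedAlgebra L K] [IsUltrametricDist K] [Finite ι]
    {p : ℕ} (hp : p.Prime) (hpn : ‖(p : K)‖ = (p : ℝ)⁻¹)
    (hprim : ∀ m : ℕ, ∃ η : K, IsPrimitiveRoot η (p ^ m))
    (hcyc : ∀ m : ℕ, ∀ η : K, IsPrimitiveRoot η (p ^ (m + 1)) →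
      (minpoly L η).natDegree = Nat.totient (p ^ (m + 1)))
    (hT : ∀ ε : K, (∃ N : ℕ, N.Coprime p ∧ ε ^ N = 1) → ε ∈ Set.range (algebraMap L K))
    (hprime : ∀ (s : Finset ι) (a : ι → K), ∃ δ > 0, ∀ ε : ι → K,
      (∀ i, ∃ N : ℕ, N.Coprime p ∧ ε i ^ N = 1) →
      ∑ i ∈ s, a i * ε i = 0 ∨ δ ≤ ‖∑ i ∈ s, a i * ε i‖)
    (a : ι → K) (ha : ∀ i, a i ∈ closure {x : K | IsAlgebraic L x}) (s : Finset ι) :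
    ∃ δ > 0, ∀ ε η : ι → K,
      (∀ i, ∃ N : ℕ, N.Coprime p ∧ ε i ^ N = 1) → (∀ i, ∃ m : ℕ, η i ^ p ^ m = 1) →
      ∑ i ∈ s, a i * ε i * η i = 0 ∨ δ ≤ ‖∑ i ∈ s, a i * ε i * η i‖ := by
  classical
  have hfact : Fact p.Prime := ⟨hp⟩
  induction s using Finset.strongInduction with
  | H s ih =>
  rcases s.eq_empty_or_nonempty with rfl | ⟨i0, hi0⟩
  · exact ⟨1, one_pos, fun _ _ _ _ => Or.inl (by simp)⟩
  have hp0 : (0 : ℝ) < p := by exact_mod_cast hp.pos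
  -- minimum over proper subsets
  obtain ⟨c, hc, Hc⟩ := finite_min_pos (S := {t : Finset ι | t ⊂ s})
    (s.ssubsets.finite_toSet.subset (fun t ht => by
      simpa using ht))
    (fun t δ => ∀ ε η : ι → K,
      (∀ i, ∃ N : ℕ, N.Coprime p ∧ ε i ^ N = 1) → (∀ i, ∃ m : ℕ, η i ^ p ^ m = 1) →
      ∑ i ∈ t, a i * ε i * η i = 0 ∨ δ ≤ ‖∑ i ∈ t, a i * ε i * η i‖)
    (fun t δ δ' h hle ε η h1 h2 => (h ε η h1 h2).imp id hle.trans)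
    (fun t ht => ih t ht)
  set δ0 : ℝ := c / (2 * p) with hδ0
  have hdzpos : 0 < δ0 := by positivity
  have hpδ0 : p * δ0 < c := by
    rw [hδ0]
    field_simp
    linarith
  have happ : ∀ i, ∃ y : K, IsAlgebraic L y ∧ ‖a i - y‖ < δ0 := by
    intro i
    obtain ⟨y, hy, hd⟩ := Metric.mem_closure_iff.mp (ha i) δ0 hdzpos
    exact ⟨y, hy, by rwa [dist_eq_norm] at hd⟩
  choose a' ha'alg ha' using happ
  obtain ⟨r, hr⟩ := degree_stab hp hprim hcyc (a' '' (s : Set ι)) (s.finite_toSet.image _)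
    (by rintro _ ⟨i, _, rfl⟩; exact ha'alg i)
  have hfinset : ∀ m, {x : K | x ^ p ^ m = 1}.Finite := by
    intro m
    have hpos : 0 < p ^ m := pow_pos hp.pos _
    refine (Polynomial.nthRoots (p ^ m) (1 : K)).toFinset.finite_toSet.subset ?_
    intro x hx
    simp only [Finset.mem_coe, Multiset.mem_toFinset]
    exact (Polynomial.mem_nthRoots hpos).mpr hx
  obtain ⟨δ1, hδ1, H1⟩ := finite_min_pos
    (S := {h : ι → K | ∀ i, h i ∈ {x : K | x ^ p ^ r = 1}})
    (Set.Finite.pi' fun _ => hfinset r)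
    (fun h δ => ∀ ε : ι → K, (∀ i, ∃ N : ℕ, N.Coprime p ∧ ε i ^ N = 1) →
      ∑ i ∈ s, (a i * h i) * ε i = 0 ∨ δ ≤ ‖∑ i ∈ s, (a i * h i) * ε i‖)
    (fun t δ δ' h hle ε h1 => (h ε h1).imp id hle.trans)
    (fun h _ => hprime s _)
  have hnorm1 : ∀ (x : K) (N : ℕ), N ≠ 0 → x ^ N = 1 → ‖x‖ = 1 := by
    intro x N hN hx
    have : ‖x‖ ^ N = 1 := by rw [← norm_pow, hx, norm_one]
    exact (pow_eq_one_iff_of_nonneg (norm_nonneg _) hN).mp this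
  have hεnorm : ∀ ε : K, (∃ N : ℕ, N.Coprime p ∧ ε ^ N = 1) → ‖ε‖ = 1 := by
    rintro ε ⟨N, hN, h⟩
    refine hnorm1 ε N ?_ h
    rintro rfl
    rw [Nat.coprime_zero_left] at hN
    exact hp.one_lt.ne' hN
  have hηnorm : ∀ η : K, (∃ m : ℕ, η ^ p ^ m = 1) → ‖η‖ = 1 := by
    rintro η ⟨N, h⟩
    exact hnorm1 η _ (pow_ne_zero _ hp.ne_zero) h
  have main : ∀ ε η : ι → K,
      (∀ i, ∃ N : ℕ, N.Coprime p ∧ ε i ^ N = 1) → (∀ i, ∃ m : ℕ, η i ^ p ^ m = 1) →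
      η i0 = 1 →
      ∑ i ∈ s, a i * ε i * η i = 0 ∨ min δ1 δ0 ≤ ‖∑ i ∈ s, a i * ε i * η i‖ := by
    intro ε η hε hη hηi0
    have hup : ∀ (x : K) (m n : ℕ), m ≤ n → x ^ p ^ m = 1 → x ^ p ^ n = 1 := by
      intro x m n hmn hx
      obtain ⟨k, rfl⟩ := Nat.exists_eq_add_of_le hmn
      rw [pow_add, pow_mul, hx, one_pow]
    by_cases hall : ∀ i ∈ s, η i ^ p ^ r = 1
    · have h := H1 (fun i => if i ∈ s then η i else 1) (by
        intro i
        by_cases hi : i ∈ s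
        · simp only [hi, if_true]; exact hall i hi
        · simp [hi]) ε hε
      have e : ∑ i ∈ s, (a i * if i ∈ s then η i else 1) * ε i = ∑ i ∈ s, a i * ε i * η i := by
        refine Finset.sum_congr rfl fun i hi => ?_
        rw [if_pos hi]; ring
      simp only [e] at h
      exact h.imp id (min_le_left _ _).trans
    have hex : ∃ m, ∀ i ∈ s, η i ^ p ^ m = 1 := by
      choose m hm using hη
      exact ⟨s.sup m, fun i hi => hup _ _ _ (Finset.le_sup hi) (hm i)⟩
    obtain ⟨m, hmr, hm1, i1, hi1, hm2⟩ : ∃ m ≥ r, (∀ i ∈ s, η i ^ p ^ (m + 1) = 1) ∧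
        ∃ i1 ∈ s, η i1 ^ p ^ m ≠ 1 := by
      have hs := Nat.find_spec hex
      have hlt : r < Nat.find hex := by
        by_contra! hle
        exact hall fun i hi => hup _ _ _ hle (hs i hi)
      refine ⟨Nat.find hex - 1, by omega, ?_, ?_⟩
      · rw [Nat.sub_add_cancel (by omega)]
        exact hs
      · have := Nat.find_min hex (m := Nat.find hex - 1) (by omega)
        push Not at this
        exact this
    set θ := η i1 with hθ
    have hθprim : IsPrimitiveRoot θ (p ^ (m + 1)) := by
      have := orderOf_eq_prime_pow hm2 (hm1 i1 hi1)
      rw [← this]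
      exact IsPrimitiveRoot.orderOf θ
    have hNZ : NeZero (p ^ (m + 1)) := ⟨pow_ne_zero _ hp.ne_zero⟩
    have hexp : ∀ i, ∃ e, i ∈ s → e < p ^ (m + 1) ∧ θ ^ e = η i := by
      intro i
      by_cases hi : i ∈ s
      · obtain ⟨e, he1, he2⟩ := hθprim.eq_pow_of_pow_eq_one (hm1 i hi)
        exact ⟨e, fun _ => ⟨he1, he2⟩⟩
      · exact ⟨0, fun h => absurd h hi⟩
    choose e he using hexp
    have h1lt : 1 < p ^ (m + 1) := Nat.one_lt_pow (by omega) hp.one_lt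
    have hei0 : e i0 = 0 := hθprim.pow_inj (he i0 hi0).1 (by omega)
      (by rw [(he i0 hi0).2, hηi0, pow_zero])
    have hei1 : e i1 = 1 := hθprim.pow_inj (he i1 hi1).1 h1lt
      (by rw [(he i1 hi1).2, pow_one])
    let S : ℕ → Finset ι := fun j => s.filter (fun i => e i % p = j)
    have hSsub : ∀ j, S j ⊂ s := by
      intro j
      refine (Finset.filter_subset _ _).ssubset_of_ne fun heq => ?_
      have h0 : i0 ∈ S j := by simp only [S, heq]; exact hi0
      have h1 : i1 ∈ S j := by simp only [S, heq]; exact hi1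
      have h0 := (Finset.mem_filter.mp h0).2
      have h1 := (Finset.mem_filter.mp h1).2
      rw [hei0, Nat.zero_mod] at h0
      rw [hei1, Nat.mod_eq_of_lt hp.one_lt] at h1
      omega
    set M := IntermediateField.adjoin L (a' '' (s : Set ι) ∪ {x | x ^ p ^ m = 1}) with hM
    have hθM : θ ^ p ∈ M := by
      refine IntermediateField.subset_adjoin _ _ (Or.inr ?_)
      simp only [Set.mem_ofPred_eq]
      rw [← pow_mul, ← pow_succ', hθprim.pow_eq_one]
    have hintroot : ∀ (n : ℕ) (x : K), x ^ p ^ n = 1 → IsIntegral L x := by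
      intro n x hx
      refine ⟨Polynomial.X ^ (p ^ n) - 1, Polynomial.monic_X_pow_sub_C _
        (pow_ne_zero _ hp.ne_zero), ?_⟩
      simp [hx]
    have hMalg : Algebra.IsAlgebraic L M := by
      apply IntermediateField.isAlgebraic_adjoin
      rintro x (⟨i, _, rfl⟩ | hx)
      · exact isAlgebraic_iff_isIntegral.mp (ha'alg i)
      · exact hintroot m x hx
    let y : ℕ → K := fun j => ∑ i ∈ S j, a' i * ε i * (θ ^ p) ^ (e i / p)
    have hyM : ∀ j, y j ∈ M := by
      intro j
      refine sum_mem fun i hi => ?_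
      have hi' := (Finset.mem_filter.mp hi).1
      refine mul_mem (mul_mem ?_ ?_) (pow_mem hθM _)
      · exact IntermediateField.subset_adjoin _ _ (Or.inl ⟨i, hi', rfl⟩)
      · obtain ⟨l, hl⟩ := hT (ε i) (hε i)
        rw [← hl]
        exact M.algebraMap_mem l
    have hyj : ∀ j, y j * θ ^ j = ∑ i ∈ S j, a' i * ε i * η i := by
      intro j
      simp only [y]
      rw [Finset.sum_mul]
      refine Finset.sum_congr rfl fun i hi => ?_
      have hi' := Finset.mem_filter.mp hi
      rw [mul_assoc, ← (he i hi'.1).2, ← pow_mul, ← pow_add]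
      rw [← hi'.2, Nat.div_add_mod]
    have hmaps : ∀ i ∈ s, e i % p ∈ Finset.range p := fun i _ =>
      Finset.mem_range.mpr (Nat.mod_lt _ hp.pos)
    have hysum : ∑ j ∈ Finset.range p, y j * θ ^ j = ∑ i ∈ s, a' i * ε i * η i := by
      simp_rw [hyj]
      exact Finset.sum_fiberwise_of_maps_to hmaps _
    obtain ⟨ξ, hξ⟩ := hprim 1
    rw [pow_one] at hξ
    have hbound : ∀ j < p, ‖∑ i ∈ S j, a' i * ε i * η i‖ ≤
        p * ‖∑ i ∈ s, a' i * ε i * η i‖ := by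
      intro j hj
      rw [← hyj, ← hysum]
      exact eigen_bound hp hpn M (hintroot _ θ hθprim.pow_eq_one).isAlgebraic hθM
        (hr m hmr θ hθprim) hξ y hyM j hj
    have hclose : ∀ t : Finset ι, ‖∑ i ∈ t, a i * ε i * η i - ∑ i ∈ t, a' i * ε i * η i‖ ≤ δ0 := by
      intro t
      rw [← Finset.sum_sub_distrib]
      apply IsUltrametricDist.norm_sum_le_of_forall_le_of_nonneg hdzpos.le
      intro i _
      rw [← sub_mul, ← sub_mul, norm_mul, norm_mul, hεnorm _ (hε i), hηnorm _ (hη i), mul_one,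
        mul_one]
      exact (ha' i).le
    by_contra! hcon
    obtain ⟨hne, hlt⟩ := hcon
    have hlt0 : ‖∑ i ∈ s, a i * ε i * η i‖ ≤ δ0 := hlt.le.trans (min_le_right _ _)
    have hs' : ‖∑ i ∈ s, a' i * ε i * η i‖ ≤ δ0 := by
      have := IsUltrametricDist.norm_add_le_max (∑ i ∈ s, a i * ε i * η i)
        (-(∑ i ∈ s, a i * ε i * η i - ∑ i ∈ s, a' i * ε i * η i))
      rw [← sub_eq_add_neg, sub_sub_cancel, norm_neg] at this
      exact this.trans (max_le hlt0 (hclose s))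
    have hp1 : (1 : ℝ) ≤ p := by exact_mod_cast hp.one_lt.le
    apply hne
    rw [← Finset.sum_fiberwise_of_maps_to hmaps]
    refine Finset.sum_eq_zero fun j hj => ?_
    have hj' := Finset.mem_range.mp hj
    rcases Hc (S j) (hSsub j) ε η hε hη with h | h
    · exact h
    · exfalso
      have h1 : ‖∑ i ∈ S j, a' i * ε i * η i‖ ≤ p * δ0 :=
        (hbound j hj').trans (by gcongr)
      have h2 : ‖∑ i ∈ S j, a i * ε i * η i‖ ≤ p * δ0 := by
        have := IsUltrametricDist.norm_add_le_max
          (∑ i ∈ S j, a i * ε i * η i - ∑ i ∈ S j, a' i * ε i * η i)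
          (∑ i ∈ S j, a' i * ε i * η i)
        rw [sub_add_cancel] at this
        refine this.trans (max_le ((hclose _).trans ?_) h1)
        nlinarith
      linarith
  refine ⟨min δ1 δ0, lt_min hδ1 hdzpos, fun ε η hε hη => ?_⟩
  have hn0 := hηnorm _ (hη i0)
  have hne0 : η i0 ≠ 0 := by
    rw [← norm_pos_iff, hn0]; exact one_pos
  have e : ∑ i ∈ s, a i * ε i * η i = η i0 * ∑ i ∈ s, a i * ε i * (η i * (η i0)⁻¹) := by
    rw [Finset.mul_sum]
    refine Finset.sum_congr rfl fun i _ => ?_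
    field_simp
  rw [e, norm_mul, hn0, one_mul, mul_eq_zero]
  have h := main ε (fun i => η i * (η i0)⁻¹) hε (fun i => by
    obtain ⟨m, hm⟩ := hη i
    obtain ⟨n, hn⟩ := hη i0
    refine ⟨m + n, ?_⟩
    rw [mul_pow, inv_pow]
    have h1 : η i ^ p ^ (m + n) = 1 := by rw [pow_add, pow_mul, hm, one_pow]
    have h2 : η i0 ^ p ^ (m + n) = 1 := by rw [add_comm, pow_add, pow_mul, hn, one_pow]
    rw [h1, h2]; simp) (mul_inv_cancel₀ hne0)
  exact h.imp Or.inr id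

universe u

/-- fixed elements of powers of Frobenius -/
def frobSubring (A : Type u) [CommRing A] (p : ℕ) [Fact p.Prime] [CharP A p] : Subring A where
  carrier := {x | ∃ m : ℕ, 1 ≤ m ∧ x ^ p ^ m = x}
  mul_mem' := by
    rintro x y ⟨m, hm, hx⟩ ⟨n, hn, hy⟩
    have key : ∀ (z : A) (m : ℕ), z ^ p ^ m = z → ∀ n, z ^ p ^ (m * n) = z := by
      intro z m hz n
      induction n with
      | zero => simp
      | succ n ih => rw [Nat.mul_succ, pow_add, pow_mul, ih, hz]
    refine ⟨m * n, Nat.mul_pos hm hn, ?_⟩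
    rw [mul_pow, key x m hx n, mul_comm m n, key y n hy m]
  one_mem' := ⟨1, le_rfl, one_pow _⟩
  add_mem' := by
    rintro x y ⟨m, hm, hx⟩ ⟨n, hn, hy⟩
    have key : ∀ (z : A) (m : ℕ), z ^ p ^ m = z → ∀ n, z ^ p ^ (m * n) = z := by
      intro z m hz n
      induction n with
      | zero => simp
      | succ n ih => rw [Nat.mul_succ, pow_add, pow_mul, ih, hz]
    refine ⟨m * n, Nat.mul_pos hm hn, ?_⟩
    rw [add_pow_char_pow, key x m hx n, mul_comm m n, key y n hy m]
  zero_mem' := ⟨1, le_rfl, zero_pow (pow_ne_zero _ (Fact.out : p.Prime).ne_zero)⟩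
  neg_mem' := by
    rintro x ⟨m, hm, hx⟩
    refine ⟨m, hm, ?_⟩
    have h := sub_pow_char_pow (p := p) (n := m) (0 : A) x
    rw [zero_pow (pow_ne_zero _ (Fact.out : p.Prime).ne_zero), hx] at h
    simpa using h

theorem frobSubring_isField (A : Type u) [CommRing A] [Nontrivial A] (p : ℕ) [Fact p.Prime]
    [CharP A p] (hloc : ∀ x : A, IsUnit x ∨ IsNilpotent x) : IsField (frobSubring A p) := by
  have hp : p.Prime := Fact.out
  refine ⟨⟨0, 1, zero_ne_one⟩, mul_comm, ?_⟩
  rintro ⟨x, m, hm, hx⟩ hne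
  have hx0 : x ≠ 0 := fun h => hne (Subtype.ext h)
  have hp2 : 2 ≤ p ^ m := hp.two_le.trans (Nat.le_self_pow (by omega) p)
  rcases hloc x with hu | ⟨j, hj⟩
  · have h1 : x ^ (p ^ m - 1) = 1 := by
      apply hu.mul_left_cancel
      rw [← pow_succ', Nat.sub_add_cancel (by omega), hx, mul_one]
    refine ⟨⟨x, m, hm, hx⟩ ^ (p ^ m - 2), Subtype.ext ?_⟩
    change x * x ^ (p ^ m - 2) = 1
    rw [← pow_succ', ← h1]
    congr 1
    omega
  · exfalso
    have key : ∀ n, x ^ p ^ (m * n) = x := by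
      intro n
      induction n with
      | zero => simp
      | succ n ih => rw [Nat.mul_succ, pow_add, pow_mul, ih, hx]
    apply hx0
    rw [← key j]
    apply pow_eq_zero_of_le _ hj
    calc j ≤ m * j := Nat.le_mul_of_pos_left _ hm
      _ ≤ p ^ (m * j) := (Nat.lt_pow_self hp.one_lt).le

theorem witt_embed_ring {p : ℕ} [hp : Fact p.Prime] {O : Type u} [CommRing O]
    [Fact (¬ IsUnit (p : O))] [IsAdicComplete (Ideal.span {(p : O)}) O]
    (hloc : ∀ x : O, IsUnit x ∨ ∃ j : ℕ, x ^ j ∈ Ideal.span {(p : O)}) :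
    ∃ (k : Type u) (_ : Field k) (_ : CharP k p) (_ : PerfectRing k p)
      (ι : WittVector p k →+* O),
      ∀ (ε : O) (N : ℕ), N.Coprime p → ε ^ N = 1 →
        ∃ x : k, x ^ N = 1 ∧ ε - ι (WittVector.teichmuller p x) ∈ Ideal.span {(p : O)} := by
  classical
  have hnil : ∀ x : ModP O p, IsUnit x ∨ IsNilpotent x := by
    intro x
    obtain ⟨y, rfl⟩ := Ideal.Quotient.mk_surjective x
    rcases hloc y with h | ⟨j, hj⟩
    · exact Or.inl (h.map _)
    · refine Or.inr ⟨j, ?_⟩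
      rw [← map_pow]
      exact Ideal.Quotient.eq_zero_iff_mem.2 hj
  let k := frobSubring (ModP O p) p
  let _ : Field k := (frobSubring_isField (ModP O p) p hnil).toField
  have hchar : CharP k p := RingHom.charP k.subtype Subtype.val_injective p
  have hperf : PerfectRing k p := by
    apply PerfectRing.ofSurjective
    rintro ⟨x, m, hm, hx⟩
    refine ⟨⟨x, m, hm, hx⟩ ^ p ^ (m - 1), Subtype.ext ?_⟩
    change (x ^ p ^ (m - 1)) ^ p = x
    rw [← pow_mul, ← pow_succ, Nat.sub_add_cancel hm, hx]
  let lf : k →+* PreTilt O p := Perfection.lift p k (ModP O p) k.subtype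
  have hlf : ∀ x : k, PreTilt.coeff 0 (lf x) = (x : ModP O p) := by
    intro x
    exact congrArg (fun f : k →+* ModP O p => f x)
      ((Perfection.lift p k (ModP O p)).symm_apply_apply k.subtype)
  refine ⟨k, inferInstance, hchar, hperf,
    (WittVector.fontaineTheta O p).comp (WittVector.map lf), ?_⟩
  intro ε N hN hε
  have hN0 : 0 < N := by
    rcases Nat.eq_zero_or_pos N with rfl | h
    · exact absurd ((Nat.coprime_zero_left _).1 hN) hp.out.one_lt.ne'
    · exact h
  have he : (Ideal.Quotient.mk (Ideal.span {(p : O)}) ε : ModP O p) ^ N = 1 := by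
    rw [← map_pow, hε, map_one]
  let x : k := ⟨(Ideal.Quotient.mk (Ideal.span {(p : O)}) ε : ModP O p), N.totient,
      Nat.totient_pos.2 hN0, by
    have h := Nat.ModEq.pow_totient hN.symm
    have h2 : N ∣ p ^ N.totient - 1 := (Nat.modEq_iff_dvd' (Nat.one_le_pow _ _ hp.out.pos)).1 h.symm
    obtain ⟨c, hc⟩ := h2
    have h3 : p ^ N.totient = N * c + 1 := by
      have := Nat.one_le_pow N.totient p hp.out.pos
      omega
    rw [h3, pow_succ, pow_mul, he, one_pow, one_mul]⟩
  refine ⟨x, Subtype.ext he, ?_⟩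
  rw [← Ideal.Quotient.eq, RingHom.comp_apply, WittVector.mk_fontaineTheta,
    WittVector.map_teichmuller, WittVector.teichmuller_coeff_zero, hlf]

/-- the valuation ring -/
def ballRing (K : Type u) [NormedField K] [IsUltrametricDist K] : Subring K where
  carrier := {x | ‖x‖ ≤ 1}
  mul_mem' := by
    intro a b ha hb
    change ‖a * b‖ ≤ 1
    rw [norm_mul]
    exact mul_le_one₀ ha (norm_nonneg _) hb
  one_mem' := by change ‖(1 : K)‖ ≤ 1; simp
  add_mem' := by
    intro a b ha hb
    exact (IsUltrametricDist.norm_add_le_max a b).trans (max_le ha hb)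
  zero_mem' := by change ‖(0 : K)‖ ≤ 1; simp
  neg_mem' := by
    intro a ha
    change ‖-a‖ ≤ 1
    rw [norm_neg]
    exact ha

theorem ballRing_mem_span {p : ℕ} (hp : p.Prime) {K : Type u} [NormedField K]
    [IsUltrametricDist K] (hpn : ‖(p : K)‖ = (p : ℝ)⁻¹) (x : ballRing K) (n : ℕ) :
    x ∈ Ideal.span {(p : ballRing K)} ^ n ↔ ‖(x : K)‖ ≤ ((p : ℝ)⁻¹) ^ n := by
  have hp0 : (0 : ℝ) < (p : ℝ)⁻¹ := inv_pos.2 (by exact_mod_cast hp.pos)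
  have hpK : (p : K) ≠ 0 := by
    intro h
    rw [h, norm_zero] at hpn
    exact hp0.ne hpn
  rw [Ideal.span_singleton_pow, Ideal.mem_span_singleton]
  constructor
  · rintro ⟨y, rfl⟩
    have : ‖(y : K)‖ ≤ 1 := y.2
    have h2 : (((p : ballRing K) ^ n * y : ballRing K) : K) = (p : K) ^ n * (y : K) := by
      push_cast; rfl
    rw [h2, norm_mul, norm_pow, hpn]
    exact mul_le_of_le_one_right (by positivity) this
  · intro h
    refine ⟨⟨(x : K) / (p : K) ^ n, ?_⟩, ?_⟩
    · change ‖(x : K) / (p : K) ^ n‖ ≤ 1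
      rw [norm_div, norm_pow, hpn]
      exact div_le_one_of_le₀ h (by positivity)
    · apply Subtype.ext
      push_cast
      field_simp

theorem ballRing_adic {p : ℕ} (hp : p.Prime) {K : Type u} [NormedField K]
    [IsUltrametricDist K] [CompleteSpace K] (hpn : ‖(p : K)‖ = (p : ℝ)⁻¹) :
    IsAdicComplete (Ideal.span {(p : ballRing K)}) (ballRing K) := by
  have hp0 : (0 : ℝ) < (p : ℝ)⁻¹ := inv_pos.2 (by exact_mod_cast hp.pos)
  have hp1 : (p : ℝ)⁻¹ < 1 := inv_lt_one_of_one_lt₀ (by exact_mod_cast hp.one_lt)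
  have hmem : ∀ (x y : ballRing K) (n : ℕ),
      x ≡ y [SMOD (Ideal.span {(p : ballRing K)} ^ n • ⊤ : Submodule (ballRing K) (ballRing K))] ↔
        ‖(x : K) - y‖ ≤ ((p : ℝ)⁻¹) ^ n := by
    intro x y n
    rw [SModEq.sub_mem, smul_eq_mul, Ideal.mul_top, ballRing_mem_span hp hpn]
    rfl
  have hlim := tendsto_pow_atTop_nhds_zero_of_lt_one hp0.le hp1
  refine { haus' := ?_, prec' := ?_ }
  · intro x hx
    have h : ∀ n, ‖(x : K)‖ ≤ ((p : ℝ)⁻¹) ^ n := fun n => by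
      have := (hmem x 0 n).1 (hx n)
      simpa using this
    have h0 : ‖(x : K)‖ ≤ 0 := ge_of_tendsto' hlim h
    exact Subtype.ext (norm_le_zero_iff.1 h0)
  · intro f hf
    have hf' : ∀ m n, m ≤ n → ‖(f m : K) - f n‖ ≤ ((p : ℝ)⁻¹) ^ m := fun m n h =>
      (hmem _ _ _).1 (hf h)
    have hc : CauchySeq (fun n => (f n : K)) := by
      apply cauchySeq_of_le_tendsto_0' (fun n => ((p : ℝ)⁻¹) ^ n) _ hlim
      intro n m h
      rw [dist_eq_norm]
      exact hf' n m h
    obtain ⟨L, hL⟩ := cauchySeq_tendsto_of_complete hc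
    have hL1 : ‖L‖ ≤ 1 := le_of_tendsto' hL.norm (fun n => (f n).2)
    refine ⟨⟨L, hL1⟩, fun n => (hmem _ _ _).2 ?_⟩
    have : Filter.Tendsto (fun m => ‖(f n : K) - f m‖) Filter.atTop (nhds ‖(f n : K) - L‖) :=
      (hL.const_sub _).norm
    exact le_of_tendsto this (Filter.eventually_atTop.2 ⟨n, fun m hm => hf' n m hm⟩)

theorem norm_natCast_coprime {p N : ℕ} {K : Type u} [NormedField K]
    [IsUltrametricDist K] (hpn : ‖(p : K)‖ < 1) (hN : N.Coprime p) : ‖(N : K)‖ = 1 := by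
  apply le_antisymm (IsUltrametricDist.norm_natCast_le_one K N)
  by_contra! h
  have hb := Nat.gcd_eq_gcd_ab N p
  rw [hN] at hb
  have h1 : (1 : K) = N * (N.gcdA p : K) + p * (N.gcdB p : K) := by exact_mod_cast congrArg (Int.cast : ℤ → K) hb
  have h2 := IsUltrametricDist.norm_add_le_max ((N : K) * (N.gcdA p : K)) (p * (N.gcdB p : K))
  rw [← h1, norm_one, norm_mul, norm_mul] at h2
  have hA := IsUltrametricDist.norm_intCast_le_one K (N.gcdA p)
  have hB := IsUltrametricDist.norm_intCast_le_one K (N.gcdB p)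
  rcases le_max_iff.1 h2 with h3 | h3
  · nlinarith [norm_nonneg (N : K)]
  · nlinarith [norm_nonneg (p : K)]

theorem coprime_root_eq_one {p N : ℕ} {K : Type u} [NormedField K]
    [IsUltrametricDist K] (hpn : ‖(p : K)‖ < 1) (hN : N.Coprime p) (u : K) (hu : u ^ N = 1)
    (hu1 : ‖u - 1‖ < 1) : u = 1 := by
  by_contra hne
  have h1 : ∑ i ∈ Finset.range N, u ^ i = 0 := by
    have := geom_sum_mul u N
    rw [hu, sub_self] at this
    exact (mul_eq_zero.1 this).resolve_right (sub_ne_zero.2 hne)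
  have hule : ‖u‖ ≤ 1 := by
    have := IsUltrametricDist.norm_add_le_max (u - 1) 1
    rw [sub_add_cancel, norm_one] at this
    exact this.trans (max_le hu1.le le_rfl)
  have hpow : ∀ i, ‖u ^ i - 1‖ ≤ ‖u - 1‖ := by
    intro i
    rw [← geom_sum_mul u i, norm_mul]
    apply mul_le_of_le_one_left (norm_nonneg _)
    apply IsUltrametricDist.norm_sum_le_of_forall_le_of_nonneg zero_le_one
    intro j _
    rw [norm_pow]
    exact pow_le_one₀ (norm_nonneg _) hule
  have h2 : ‖∑ i ∈ Finset.range N, (u ^ i - 1)‖ ≤ ‖u - 1‖ :=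
    IsUltrametricDist.norm_sum_le_of_forall_le_of_nonneg (norm_nonneg _) (fun j _ => hpow j)
  rw [Finset.sum_sub_distrib, h1] at h2
  simp only [Finset.sum_const, Finset.card_range, nsmul_eq_mul, mul_one, zero_sub, norm_neg] at h2
  rw [norm_natCast_coprime hpn hN] at h2
  linarith

theorem root_norm_one {K : Type u} [NormedField K] {x : K} {N : ℕ} (h : x ^ N = 1) (hN : N ≠ 0) :
    ‖x‖ = 1 := by
  have h1 : ‖x‖ ^ N = 1 := by rw [← norm_pow, h, norm_one]
  exact (pow_eq_one_iff_of_nonneg (norm_nonneg _) hN).1 h1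

theorem witt_embed {p : ℕ} [hp : Fact p.Prime] {K : Type u} [NormedField K]
    [IsUltrametricDist K] [CompleteSpace K] (hpn : ‖(p : K)‖ = (p : ℝ)⁻¹) :
    ∃ (k : Type u) (_ : Field k) (_ : CharP k p) (_ : PerfectRing k p)
      (ι : WittVector p k →+* K),
      (∀ w, w.coeff 0 ≠ 0 → ‖ι w‖ = 1) ∧
      (∀ (ε : K) (N : ℕ), N.Coprime p → ε ^ N = 1 →
        ∃ x : k, ι (WittVector.teichmuller p x) = ε) := by
  have hp0 : (0 : ℝ) < (p : ℝ)⁻¹ := inv_pos.2 (by exact_mod_cast hp.out.pos)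
  have hp1 : (p : ℝ)⁻¹ < 1 := inv_lt_one_of_one_lt₀ (by exact_mod_cast hp.out.one_lt)
  have hunit : ∀ x : ballRing K, IsUnit x ↔ ‖(x : K)‖ = 1 := by
    intro x
    constructor
    · intro h
      obtain ⟨y, hy⟩ := h.exists_right_inv
      have h1 : ‖(x : K)‖ ≤ 1 := x.2
      have h2 : ‖(y : K)‖ ≤ 1 := y.2
      have h3 : ‖(x : K)‖ * ‖(y : K)‖ = 1 := by
        rw [← norm_mul, ← Subring.coe_mul, hy]; simp
      nlinarith [norm_nonneg (x : K), norm_nonneg (y : K)]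
    · intro h
      have hx0 : (x : K) ≠ 0 := by
        intro h0; rw [h0, norm_zero] at h; exact zero_ne_one h
      have hle : ‖(x : K)⁻¹‖ ≤ 1 := by rw [norm_inv, h, inv_one]
      exact IsUnit.of_mul_eq_one ⟨(x : K)⁻¹, hle⟩ (Subtype.ext (mul_inv_cancel₀ hx0))
  have hnu : Fact (¬ IsUnit (p : ballRing K)) := ⟨by
    rw [hunit]
    have : ((p : ballRing K) : K) = p := by push_cast; rfl
    rw [this, hpn]
    exact hp1.ne⟩
  have := ballRing_adic hp.out hpn
  have hloc : ∀ x : ballRing K, IsUnit x ∨ ∃ j : ℕ, x ^ j ∈ Ideal.span {(p : ballRing K)} := by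
    intro x
    rcases (show ‖(x : K)‖ ≤ 1 from x.2).eq_or_lt with h | h
    · exact Or.inl ((hunit x).2 h)
    · right
      obtain ⟨j, hj⟩ := exists_pow_lt_of_lt_one hp0 h
      refine ⟨j, ?_⟩
      rw [← pow_one (Ideal.span _), ballRing_mem_span hp.out hpn, pow_one]
      push_cast
      rw [norm_pow]
      exact hj.le
  obtain ⟨k, hk, hc, hper, ι, hι⟩ := witt_embed_ring hloc
  refine ⟨k, hk, hc, hper, (ballRing K).subtype.comp ι, ?_, ?_⟩
  · intro w hw
    have h1 := (WittVector.isUnit_of_coeff_zero_ne_zero w hw).map ι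
    exact (hunit _).1 h1
  · intro ε N hN hε
    have hN0 : N ≠ 0 := by
      rintro rfl
      exact absurd ((Nat.coprime_zero_left _).1 hN) hp.out.one_lt.ne'
    have hεn : ‖ε‖ = 1 := root_norm_one hε hN0
    obtain ⟨x, hxN, hx⟩ := hι ⟨ε, hεn.le⟩ N hN (Subtype.ext hε)
    refine ⟨x, ?_⟩
    rw [← pow_one (Ideal.span _), ballRing_mem_span hp.out hpn, pow_one] at hx
    set t : K := ((ballRing K).subtype.comp ι) (WittVector.teichmuller p x) with ht
    have htN : t ^ N = 1 := by rw [ht, ← map_pow, ← map_pow, hxN, map_one, map_one]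
    have hx' : ‖ε - t‖ ≤ (p : ℝ)⁻¹ := hx
    have htn : ‖t‖ = 1 := root_norm_one htN hN0
    have ht0 : t ≠ 0 := by
      intro h0; rw [h0, norm_zero] at htn; exact zero_ne_one htn
    have h1 : ε / t = 1 := by
      apply coprime_root_eq_one (p := p) (by rw [hpn]; exact hp1) hN
      · rw [div_pow, hε, htN, div_one]
      · rw [div_sub_one ht0, norm_div, htn, div_one]
        exact hx'.trans_lt hp1
    exact ((div_eq_one_iff_eq ht0).1 h1).symm

theorem cyc_irred {p : ℕ} [hp : Fact p.Prime] {k : Type u} [Field k] [CharP k p]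
    [PerfectRing k p] (m : ℕ) :
    Irreducible (Polynomial.cyclotomic (p ^ (m + 1)) (FractionRing (WittVector p k))) := by
  have hirr : Irreducible (p : WittVector p k) := WittVector.irreducible p
  have hdvr : IsDiscreteValuationRing (WittVector p k) := WittVector.isDiscreteValuationRing
  have hprime : Prime (p : WittVector p k) := hirr.prime
  have hPr : (Ideal.span {(p : WittVector p k)}).IsPrime :=
    (Ideal.span_singleton_prime hprime.ne_zero).2 hprime
  have hE := cyclotomic_prime_pow_comp_X_add_one_isEisensteinAt p m
  set W := WittVector p k
  set f : Polynomial ℤ := (Polynomial.cyclotomic (p ^ (m + 1)) ℤ).comp (Polynomial.X + 1) with hf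
  have hmon : f.Monic := by
    rw [hf]
    have := (Polynomial.cyclotomic.monic (p ^ (m + 1)) ℤ).comp_X_add_C 1
    simpa using this
  have hg : f.map (Int.castRingHom W) =
      (Polynomial.cyclotomic (p ^ (m + 1)) W).comp (Polynomial.X + Polynomial.C 1) := by
    rw [hf, Polynomial.map_comp, Polynomial.map_cyclotomic]
    simp
  have hgm : (f.map (Int.castRingHom W)).Monic := hmon.map _
  have hdeg : (f.map (Int.castRingHom W)).natDegree = f.natDegree := hmon.natDegree_map _
  have hgE : (f.map (Int.castRingHom W)).IsEisensteinAt (Ideal.span {(p : W)}) := by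
    apply hgm.isEisensteinAt_of_mem_of_notMem hPr.ne_top
    · intro n hn
      rw [hdeg] at hn
      have := hE.mem hn
      rw [Polynomial.coeff_map]
      have h2 := Ideal.mem_map_of_mem (Int.castRingHom W) this
      rw [Ideal.map_span, Set.image_singleton] at h2
      simpa using h2
    · rw [hg, Polynomial.coeff_zero_eq_eval_zero, Polynomial.eval_comp]
      simp only [Polynomial.eval_add, Polynomial.eval_X, Polynomial.eval_C, zero_add]
      rw [Polynomial.eval_one_cyclotomic_prime_pow, Ideal.span_singleton_pow,
        Ideal.mem_span_singleton]
      rintro ⟨c, hc⟩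
      apply hprime.not_isUnit
      have h1 : (p : W) * (p * c) = p * 1 := by rw [mul_one]; rw [pow_two, mul_assoc] at hc; exact hc.symm
      exact IsUnit.of_mul_eq_one c (mul_left_cancel₀ hprime.ne_zero h1)
  have hfdeg : 0 < f.natDegree := by
    rw [hf, Polynomial.natDegree_comp, Polynomial.natDegree_cyclotomic]
    have h1 : ((Polynomial.X + 1 : Polynomial ℤ)).natDegree = 1 := by
      have := Polynomial.natDegree_X_add_C (1 : ℤ)
      simpa using this
    rw [h1, mul_one]
    exact Nat.totient_pos.2 (pow_pos hp.out.pos _)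
  have hgi : Irreducible (f.map (Int.castRingHom W)) :=
    hgE.irreducible hPr hgm.isPrimitive (by rw [hdeg]; exact hfdeg)
  have hci : Irreducible (Polynomial.cyclotomic (p ^ (m + 1)) W) := by
    have h1 := (MulEquiv.irreducible_iff (Polynomial.algEquivAevalXAddC (1 : W))
      (x := Polynomial.cyclotomic (p ^ (m + 1)) W)).1
    apply h1
    rw [hg] at hgi
    simpa [Polynomial.comp_eq_aeval] using hgi
  rw [(Polynomial.cyclotomic.monic _ W).irreducible_iff_irreducible_map_fraction_map
    (K := FractionRing W), Polynomial.map_cyclotomic] at hci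
  exact hci

theorem exists_base {p : ℕ} [hp : Fact p.Prime] {K : Type u} [NormedField K]
    [IsUltrametricDist K] [CompleteSpace K] (hpn : ‖(p : K)‖ = (p : ℝ)⁻¹) :
    ∃ L : Subfield K, IsClosed (L : Set K) ∧
      (∀ m, ∀ η : K, IsPrimitiveRoot η (p ^ (m + 1)) →
        (minpoly L η).natDegree = Nat.totient (p ^ (m + 1))) ∧
      (∀ (ε : K) (N : ℕ), N.Coprime p → ε ^ N = 1 → ε ∈ L) ∧
      (∀ (ι : Type) [Fintype ι] (c : ι → K), (∀ i, c i ∈ L) → ∃ δ > 0, ∀ ε : ι → K,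
        (∀ i, ∃ N : ℕ, N.Coprime p ∧ ε i ^ N = 1) →
          ∑ i, c i * ε i = 0 ∨ δ ≤ ‖∑ i, c i * ε i‖) := by
  have hp0 : (0 : ℝ) < (p : ℝ)⁻¹ := inv_pos.2 (by exact_mod_cast hp.out.pos)
  have hp1 : (p : ℝ)⁻¹ < 1 := inv_lt_one_of_one_lt₀ (by exact_mod_cast hp.out.one_lt)
  have hpK : (p : K) ≠ 0 := by
    intro h
    rw [h, norm_zero] at hpn
    exact hp0.ne hpn
  obtain ⟨k, _, _, _, ι, hι1, hι2⟩ := witt_embed hpn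
  have hdec : ∀ w : WittVector p k, w ≠ 0 → ∃ (v : ℕ) (b : WittVector p k),
      w = (p : WittVector p k) ^ v * b ∧ ‖ι b‖ = 1 ∧ ‖ι w‖ = ((p : ℝ)⁻¹) ^ v := by
    intro w hw
    obtain ⟨v, b, hb, h⟩ := WittVector.exists_eq_pow_p_mul w hw
    refine ⟨v, b, h, hι1 b hb, ?_⟩
    rw [h, map_mul, map_pow, map_natCast, norm_mul, norm_pow, hpn, hι1 b hb, mul_one]
  have hinj : Function.Injective ι := by
    rw [injective_iff_map_eq_zero]
    intro w hw
    by_contra hne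
    obtain ⟨v, b, -, -, h⟩ := hdec w hne
    rw [hw, norm_zero] at h
    exact (pow_pos hp0 v).ne h
  have hval : ∀ (w : WittVector p k) (n : ℕ), ‖ι w‖ ≤ ((p : ℝ)⁻¹) ^ n →
      ∃ c, w = (p : WittVector p k) ^ n * c := by
    intro w n h
    by_cases hw : w = 0
    · exact ⟨0, by rw [hw, mul_zero]⟩
    · obtain ⟨v, b, hb, -, hv⟩ := hdec w hw
      rw [hv, pow_le_pow_iff_right_of_lt_one₀ hp0 hp1] at h
      refine ⟨(p : WittVector p k) ^ (v - n) * b, ?_⟩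
      rw [← mul_assoc, ← pow_add, Nat.add_sub_cancel' h, hb]
  let φ : FractionRing (WittVector p k) →+* K := IsFractionRing.lift hinj
  have hφ : ∀ w, φ (algebraMap _ _ w) = ι w := fun w => IsFractionRing.lift_algebraMap hinj w
  have hL : ∀ x : K, x ∈ φ.fieldRange ↔ ∃ (m : ℕ) (w : WittVector p k), (p : K) ^ m * x = ι w := by
    intro x
    constructor
    · rintro ⟨y, rfl⟩
      obtain ⟨a, b, hb, rfl⟩ := IsFractionRing.div_surjective (WittVector p k) y
      have hb0 : b ≠ 0 := nonZeroDivisors.ne_zero hb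
      obtain ⟨m, u, hu⟩ := WittVector.exists_eq_pow_p_mul' b hb0
      refine ⟨m, a * (u⁻¹ : (WittVector p k)ˣ), ?_⟩
      have hb1 : ι b ≠ 0 := fun h => hb0 (hinj (by rw [h, map_zero]))
      rw [map_div₀, hφ, hφ, ← mul_div_assoc, div_eq_iff hb1, ← map_natCast ι, ← map_pow, ← map_mul,
        ← map_mul]
      congr 1
      rw [hu]
      linear_combination (-(p : WittVector p k) ^ m * a) * u.inv_mul
    · rintro ⟨m, w, h⟩
      refine ⟨algebraMap _ _ w / algebraMap _ _ ((p : WittVector p k) ^ m), ?_⟩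
      rw [map_div₀, hφ, hφ, map_pow, map_natCast, ← h]
      field_simp
  refine ⟨φ.fieldRange, ?_, ?_, ?_, ?_⟩
  · rw [← closure_subset_iff_isClosed]
    intro x hx
    obtain ⟨m, hm⟩ : ∃ m : ℕ, ‖(p : K) ^ m * x‖ ≤ 1 := by
      by_cases hx0 : x = 0
      · exact ⟨0, by simp [hx0]⟩
      obtain ⟨m, hm⟩ := exists_pow_lt_of_lt_one (inv_pos.2 (norm_pos_iff.2 hx0)) hp1
      refine ⟨m, ?_⟩
      rw [norm_mul, norm_pow, hpn]
      exact (lt_inv_mul_iff₀' (norm_pos_iff.2 hx0)).1 (by simpa using hm) |>.le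
    have happ : ∀ n : ℕ, ∃ w, ‖ι w - (p : K) ^ m * x‖ ≤ ((p : ℝ)⁻¹) ^ n := by
      intro n
      obtain ⟨z, hz, hzx⟩ := Metric.mem_closure_iff.1 hx (((p : ℝ)⁻¹) ^ n) (pow_pos hp0 n)
      rw [dist_comm, dist_eq_norm] at hzx
      have h1 : ‖(p : K) ^ m * z - (p : K) ^ m * x‖ ≤ ((p : ℝ)⁻¹) ^ n := by
        rw [← mul_sub, norm_mul, norm_pow, hpn]
        exact (mul_le_of_le_one_left (norm_nonneg _) (pow_le_one₀ hp0.le hp1.le)).trans hzx.le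
      have h2 : ‖(p : K) ^ m * z‖ ≤ 1 := by
        have := IsUltrametricDist.norm_add_le_max ((p : K) ^ m * z - (p : K) ^ m * x) ((p : K) ^ m * x)
        rw [sub_add_cancel] at this
        exact this.trans (max_le (h1.trans (pow_le_one₀ hp0.le hp1.le)) hm)
      obtain ⟨l, w, hlw⟩ := (hL z).1 hz
      have h3 : ‖ι (p ^ m * w)‖ ≤ ((p : ℝ)⁻¹) ^ l := by
        rw [map_mul, map_pow, map_natCast, ← hlw, mul_left_comm, norm_mul, norm_pow, hpn]
        exact mul_le_of_le_one_right (by positivity) h2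
      obtain ⟨c, hc⟩ := hval _ _ h3
      refine ⟨c, ?_⟩
      have h4 : ι c = (p : K) ^ m * z := by
        have := congrArg ι hc
        rw [map_mul, map_mul, map_pow, map_natCast, map_pow, map_natCast, ← hlw, mul_left_comm] at this
        exact (mul_left_cancel₀ (pow_ne_zero _ hpK) this).symm
      rw [h4]
      exact h1
    choose w hw using happ
    have hcompl : IsPrecomplete (Ideal.span {(p : WittVector p k)}) (WittVector p k) := inferInstance
    have hmem : ∀ (a b : WittVector p k) (n : ℕ),
        a ≡ b [SMOD (Ideal.span {(p : WittVector p k)} ^ n • ⊤ :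
          Submodule (WittVector p k) (WittVector p k))] ↔ ‖ι a - ι b‖ ≤ ((p : ℝ)⁻¹) ^ n := by
      intro a b n
      rw [SModEq.sub_mem, smul_eq_mul, Ideal.mul_top, Ideal.span_singleton_pow,
        Ideal.mem_span_singleton, ← map_sub]
      constructor
      · rintro ⟨c, hc⟩
        rw [hc, map_mul, map_pow, map_natCast, norm_mul, norm_pow, hpn]
        apply mul_le_of_le_one_right (by positivity)
        by_cases hc0 : c = 0
        · simp [hc0]
        · obtain ⟨v, -, -, -, hv⟩ := hdec c hc0
          rw [hv]
          exact pow_le_one₀ hp0.le hp1.le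
      · intro h
        exact hval _ _ h
    obtain ⟨l, hl⟩ := hcompl.prec' w (by
      intro a b hab
      rw [hmem]
      have h1 := hw a
      have h2 : ‖(p : K) ^ m * x - ι (w b)‖ ≤ ((p : ℝ)⁻¹) ^ a := by
        rw [norm_sub_rev]
        exact (hw b).trans (pow_le_pow_of_le_one hp0.le hp1.le hab)
      have := IsUltrametricDist.norm_add_le_max (ι (w a) - (p : K) ^ m * x) ((p : K) ^ m * x - ι (w b))
      rw [sub_add_sub_cancel] at this
      exact this.trans (max_le h1 h2))
    refine (hL x).2 ⟨m, l, ?_⟩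
    have hz : ‖(p : K) ^ m * x - ι l‖ ≤ 0 := by
      refine ge_of_tendsto' (tendsto_pow_atTop_nhds_zero_of_lt_one hp0.le hp1) (fun n => ?_)
      have h1 := (hmem _ _ _).1 (hl n)
      have h2 := hw n
      rw [norm_sub_rev] at h2
      have := IsUltrametricDist.norm_add_le_max ((p : K) ^ m * x - ι (w n)) (ι (w n) - ι l)
      rw [sub_add_sub_cancel] at this
      exact this.trans (max_le h2 h1)
    exact sub_eq_zero.1 (norm_le_zero_iff.1 hz)
  · intro m η hη
    have h1 : Irreducible (Polynomial.cyclotomic (p ^ (m + 1)) φ.fieldRange) := by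
      have h2 := (MulEquiv.irreducible_iff (Polynomial.mapEquiv φ.rangeRestrictFieldEquiv)
        (x := Polynomial.cyclotomic (p ^ (m + 1)) (FractionRing (WittVector p k)))).2
        (cyc_irred m)
      rw [Polynomial.mapEquiv_apply, Polynomial.map_cyclotomic] at h2
      exact h2
    have h3 : Polynomial.cyclotomic (p ^ (m + 1)) φ.fieldRange = minpoly φ.fieldRange η := by
      apply minpoly.eq_of_irreducible_of_monic h1 _ (Polynomial.cyclotomic.monic _ _)
      rw [Polynomial.aeval_def, Polynomial.eval₂_eq_eval_map, Polynomial.map_cyclotomic]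
      exact hη.isRoot_cyclotomic (pow_pos hp.out.pos _)
    rw [← h3, Polynomial.natDegree_cyclotomic]
  · intro ε N hN hε
    obtain ⟨x, hx⟩ := hι2 ε N hN hε
    exact (hL ε).2 ⟨0, _, by rw [pow_zero, one_mul]; exact hx.symm⟩
  · intro I _ c hc
    choose m w hw using fun i => (hL (c i)).1 (hc i)
    let M := ∑ i, m i
    have hMw : ∀ i, (p : K) ^ M * c i = ι ((p : WittVector p k) ^ (M - m i) * w i) := by
      intro i
      have hle : m i ≤ M := Finset.single_le_sum (fun _ _ => Nat.zero_le _) (Finset.mem_univ i)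
      rw [map_mul, map_pow, map_natCast, ← hw i, ← mul_assoc, ← pow_add, Nat.sub_add_cancel hle]
    obtain ⟨B, hB⟩ := witt_noeth (p := p) (k := k) (fun i => (p : WittVector p k) ^ (M - m i) * w i)
    refine ⟨((p : ℝ)⁻¹) ^ B, pow_pos hp0 B, ?_⟩
    intro ε hε
    have hx : ∀ i, ∃ x : k, ι (WittVector.teichmuller p x) = ε i := by
      intro i
      obtain ⟨N, hN, h⟩ := hε i
      exact hι2 _ N hN h
    choose x hx using hx
    set s := ∑ i, ((p : WittVector p k) ^ (M - m i) * w i) * WittVector.teichmuller p (x i) with hs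
    have hsum : (p : K) ^ M * ∑ i, c i * ε i = ι s := by
      rw [hs, map_sum, Finset.mul_sum]
      refine Finset.sum_congr rfl fun i _ => ?_
      rw [map_mul, ← hMw, hx, mul_assoc]
    by_contra! hcon
    obtain ⟨hne, hlt⟩ := hcon
    have h1 : ‖ι s‖ ≤ ((p : ℝ)⁻¹) ^ B := by
      rw [← hsum, norm_mul, norm_pow, hpn]
      exact (mul_le_of_le_one_left (norm_nonneg _) (pow_le_one₀ hp0.le hp1.le)).trans hlt.le
    obtain ⟨d, hd⟩ := hval s B h1
    have h2 : s = 0 := by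
      apply hB x
      apply (WittVector.mem_span_p_pow_iff_le_coeff_eq_zero s B).1
      rw [Ideal.mem_span_singleton]
      exact ⟨d, hd⟩
    rw [h2, map_zero] at hsum
    exact hne ((mul_eq_zero.1 hsum).resolve_left (pow_ne_zero _ hpK))

theorem coef_red_subfield {K : Type u} [NormedField K] [CompleteSpace K] (C : Subfield K)
    (hC : IsClosed (C : Set K)) (hx : ∃ x ∈ C, 1 < ‖x‖) {ι : Type} [Fintype ι]
    (S : Set (ι → K)) (hS : ∀ x ∈ S, ∀ i, x i ∈ C)
    (H : ∀ c : ι → K, (∀ i, c i ∈ C) → ∃ δ > 0, ∀ x ∈ S,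
      ∑ i, c i * x i = 0 ∨ δ ≤ ‖∑ i, c i * x i‖) (a : ι → K) :
    ∃ δ > 0, ∀ x ∈ S, ∑ i, a i * x i = 0 ∨ δ ≤ ‖∑ i, a i * x i‖ := by
  letI : NontriviallyNormedField C :=
    { (inferInstance : NormedField C) with
      non_trivial := by
        obtain ⟨x, hxC, hx1⟩ := hx
        exact ⟨⟨x, hxC⟩, hx1⟩ }
  letI : NormedAlgebra C K :=
    { (inferInstance : Algebra C K) with
      norm_smul_le := fun r x => by
        rw [Algebra.smul_def, norm_mul]
        rfl }
  have : CompleteSpace C := hC.completeSpace_coe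
  obtain ⟨δ, hδ, h⟩ := coef_reduction (L := C) (K := K)
    {y : ι → C | (fun i => (y i : K)) ∈ S} (by
      intro c
      obtain ⟨δ, hδ, h⟩ := H (fun i => (c i : K)) (fun i => (c i).2)
      refine ⟨δ, hδ, fun y hy => ?_⟩
      have h1 : ((∑ i, c i * y i : C) : K) = ∑ i, (c i : K) * (y i : K) := by
        push_cast
        rfl
      rcases h _ hy with h2 | h2
      · left
        apply Subtype.ext
        rw [h1, h2]
        rfl
      · right
        change δ ≤ ‖((∑ i, c i * y i : C) : K)‖
        rw [h1]
        exact h2) a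
  refine ⟨δ, hδ, fun x hxS => ?_⟩
  exact h (fun i => ⟨x i, hS x hxS i⟩) hxS

theorem root_decomp {p : ℕ} (hp : p.Prime) {K : Type u} [Field K] (z : K) (N : ℕ) (hN : N ≠ 0)
    (hz : z ^ N = 1) :
    ∃ ε η : K, z = ε * η ∧ (∃ M : ℕ, M.Coprime p ∧ ε ^ M = 1) ∧ ∃ m : ℕ, η ^ p ^ m = 1 := by
  obtain ⟨e, M, hM, rfl⟩ := Nat.exists_eq_pow_mul_and_not_dvd hN p hp.ne_one
  have hco : M.Coprime p := ((Nat.Prime.coprime_iff_not_dvd hp).2 hM).symm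
  have hco2 : (p ^ e).Coprime M := (hco.pow_right e).symm
  have hz0 : z ≠ 0 := by
    rintro rfl
    rw [zero_pow hN] at hz
    exact zero_ne_one hz
  have hb := Nat.gcd_eq_gcd_ab (p ^ e) M
  rw [hco2] at hb
  refine ⟨z ^ (((p ^ e : ℕ) : ℤ) * (p ^ e).gcdA M), z ^ ((M : ℤ) * (p ^ e).gcdB M), ?_,
    ⟨M, hco, ?_⟩, ⟨e, ?_⟩⟩
  · rw [← zpow_add₀ hz0, ← hb]
    simp
  · rw [← zpow_natCast, ← zpow_mul]
    have : ((p ^ e : ℕ) : ℤ) * (p ^ e).gcdA M * M = ((p ^ e * M : ℕ) : ℤ) * (p ^ e).gcdA M := by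
      push_cast; ring
    rw [this, zpow_mul, zpow_natCast, hz, one_zpow]
  · rw [← zpow_natCast, ← zpow_mul]
    have : (M : ℤ) * (p ^ e).gcdB M * ((p ^ e : ℕ) : ℤ) = ((p ^ e * M : ℕ) : ℤ) * (p ^ e).gcdB M := by
      push_cast; ring
    rw [this, zpow_mul, zpow_natCast, hz, one_zpow]

theorem tv_main {p : ℕ} (hp : p.Prime) {K : Type u} [NormedField K]
    [IsUltrametricDist K] [CompleteSpace K] (hpn : ‖(p : K)‖ = (p : ℝ)⁻¹)
    (hprim : ∀ m, ∃ η : K, IsPrimitiveRoot η (p ^ m)) {ι : Type} [Fintype ι] (a : ι → K) :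
    ∃ δ > 0, ∀ z : ι → K, (∀ i, ∃ N : ℕ, N ≠ 0 ∧ z i ^ N = 1) →
      ∑ i, a i * z i = 0 ∨ δ ≤ ‖∑ i, a i * z i‖ := by
  classical
  have : Fact p.Prime := ⟨hp⟩
  have hinvn : 1 < ‖(p : K)⁻¹‖ := by
    rw [norm_inv, hpn, inv_inv]
    exact_mod_cast hp.one_lt
  obtain ⟨L, hLc, hcyc, hT, hpr⟩ := exists_base hpn
  have hexL : ∃ x ∈ L, 1 < ‖x‖ := ⟨(p : K)⁻¹, inv_mem (natCast_mem L p), hinvn⟩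
  letI : NontriviallyNormedField L :=
    { (inferInstance : NormedField L) with
      non_trivial := by
        obtain ⟨x, hxC, hx1⟩ := hexL
        exact ⟨⟨x, hxC⟩, hx1⟩ }
  letI : NormedAlgebra L K :=
    { (inferInstance : Algebra L K) with
      norm_smul_le := fun r x => by
        rw [Algebra.smul_def, norm_mul]
        rfl }
  have : CompleteSpace L := hLc.completeSpace_coe
  have : IsUltrametricDist L := IsUltrametricDist.subtype (fun x => x ∈ L)
  have hprime : ∀ (s : Finset ι) (a : ι → K), ∃ δ > 0, ∀ ε : ι → K,
      (∀ i, ∃ N : ℕ, N.Coprime p ∧ ε i ^ N = 1) →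
        ∑ i ∈ s, a i * ε i = 0 ∨ δ ≤ ‖∑ i ∈ s, a i * ε i‖ := by
    intro s a
    obtain ⟨δ, hδ, h⟩ := coef_red_subfield L hLc hexL
      {ε : ι → K | ∀ i, ∃ N : ℕ, N.Coprime p ∧ ε i ^ N = 1}
      (fun ε hε i => by
        obtain ⟨N, hN, h⟩ := hε i
        exact hT _ N hN h)
      (fun c hc => hpr ι c hc) (fun i => if i ∈ s then a i else 0)
    refine ⟨δ, hδ, fun ε hε => ?_⟩
    have := h ε hε
    simpa [ite_mul, Finset.sum_ite_mem] using this
  have htor : ∀ c : ι → K, (∀ i, c i ∈ closure {x : K | IsAlgebraic L x}) → ∃ δ > 0,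
      ∀ z ∈ {z : ι → K | ∀ i, ∃ N : ℕ, N ≠ 0 ∧ z i ^ N = 1},
        ∑ i, c i * z i = 0 ∨ δ ≤ ‖∑ i, c i * z i‖ := by
    intro c hc
    obtain ⟨δ, hδ, h⟩ := tv_algebraic (L := L) hp hpn hprim (fun m η hη => hcyc m η hη)
      (by
        rintro ε ⟨N, hN, hε⟩
        exact ⟨⟨ε, hT ε N hN hε⟩, rfl⟩) hprime c hc Finset.univ
    refine ⟨δ, hδ, fun z hz => ?_⟩
    have hd : ∀ i, ∃ ε η : K, z i = ε * η ∧ (∃ M : ℕ, M.Coprime p ∧ ε ^ M = 1) ∧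
        ∃ m : ℕ, η ^ p ^ m = 1 := fun i => by
      obtain ⟨N, hN, h⟩ := hz i
      exact root_decomp hp (z i) N hN h
    choose ε η h1 h2 h3 using hd
    have := h ε η h2 h3
    simpa only [h1, ← mul_assoc] using this
  let Ca : Subfield K := (algebraicClosure L K).toSubfield
  have hCa : (Ca.topologicalClosure : Set K) = closure {x : K | IsAlgebraic L x} := by
    have h1 : (Ca : Set K) = {x : K | IsAlgebraic L x} := by
      ext x
      exact mem_algebraicClosure_iff
    rw [← h1]
    rfl
  obtain ⟨δ, hδ, h⟩ := coef_red_subfield Ca.topologicalClosure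
    (Subfield.isClosed_topologicalClosure _)
    ⟨(p : K)⁻¹, inv_mem (natCast_mem _ p), hinvn⟩
    {z : ι → K | ∀ i, ∃ N : ℕ, N ≠ 0 ∧ z i ^ N = 1}
    (by
      intro z hz i
      obtain ⟨N, hN, h⟩ := hz i
      apply Subfield.le_topologicalClosure
      change z i ∈ algebraicClosure L K
      rw [mem_algebraicClosure_iff]
      have hIntg : IsIntegral L (z i) := IsIntegral.of_pow (Nat.pos_of_ne_zero hN) (by
        rw [h]; exact isIntegral_one)
      exact hIntg.isAlgebraic)
    (fun c hc => htor c (fun i => by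
      have := hc i
      rw [← SetLike.mem_coe, hCa] at this
      exact this)) a
  exact ⟨δ, hδ, fun z hz => h z hz⟩

/-- For a nonzero `F ∈ ℂ_p[X₁,…,X_n]`, `inf(F)` is strictly positive and
`c(F) = -log(inf(F)/|F|_p) ≥ 0`. -/
theorem stmt11 {p : ℕ} (hp : p.Prime)
    {K : Type*} [NontriviallyNormedField K] [IsUltrametricDist K] [IsAlgClosed K]
    [CompleteSpace K] (hpnorm : ‖(p : K)‖ = (p : ℝ)⁻¹)
    {n : ℕ} (F : MvPolynomial (Fin n) K) (hF : F ≠ 0) :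
    0 < infMv F ∧ 0 ≤ -Real.log (infMv F / mvGaussNorm F) := by
  classical
  have hp0 : (0 : ℝ) < (p : ℝ)⁻¹ := inv_pos.2 (by exact_mod_cast hp.pos)
  have hpK : (p : K) ≠ 0 := by
    intro h
    rw [h, norm_zero] at hpnorm
    exact hp0.ne hpnorm
  have hprim : ∀ m, ∃ η : K, IsPrimitiveRoot η (p ^ m) := by
    intro m
    have : NeZero ((p ^ m : ℕ) : K) := ⟨by push_cast; exact pow_ne_zero _ hpK⟩
    exact HasEnoughRootsOfUnity.exists_primitiveRoot K (p ^ m)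
  obtain ⟨δ, hδ, hmain⟩ := tv_main hp hpnorm hprim (fun d : F.support => F.coeff d)
  -- evaluation at torsion points
  have heval : ∀ ζ : Fin n → Kˣ, MvPolynomial.eval (fun i => (ζ i : K)) F =
      ∑ d : F.support, F.coeff d * ∏ i, (ζ i : K) ^ (d : Fin n →₀ ℕ) i := by
    intro ζ
    rw [MvPolynomial.eval_eq', ← Finset.sum_coe_sort]
  have htor : ∀ ζ : Fin n → Kˣ, (∀ i, IsOfFinOrder (ζ i)) → ∀ d : Fin n →₀ ℕ,
      ∃ N : ℕ, N ≠ 0 ∧ (∏ i, (ζ i : K) ^ d i) ^ N = 1 := by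
    intro ζ hζ d
    have h1 : IsOfFinOrder (∏ i, ζ i ^ d i) := by
      have h2 : ∀ i ∈ (Finset.univ : Finset (Fin n)), ζ i ^ d i ∈ CommGroup.torsion Kˣ :=
        fun i _ => (hζ i).pow
      exact prod_mem h2
    obtain ⟨N, hN, h⟩ := isOfFinOrder_iff_pow_eq_one.1 h1
    refine ⟨N, hN.ne', ?_⟩
    have := congrArg (Units.val) h
    simpa using this
  set S := {r : ℝ | ∃ ζ : Fin n → Kˣ, (∀ i, IsOfFinOrder (ζ i)) ∧
    MvPolynomial.eval (fun i => (ζ i : K)) F ≠ 0 ∧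
    r = ‖MvPolynomial.eval (fun i => (ζ i : K)) F‖} with hS
  have hlow : ∀ r ∈ S, δ ≤ r := by
    rintro r ⟨ζ, hζ, hne, rfl⟩
    have := hmain (fun d => ∏ i, (ζ i : K) ^ (d : Fin n →₀ ℕ) i) (fun d => htor ζ hζ d)
    rw [← heval] at this
    exact this.resolve_left hne
  have hup : ∀ r ∈ S, r ≤ mvGaussNorm F := by
    rintro r ⟨ζ, hζ, hne, rfl⟩
    rw [heval]
    apply IsUltrametricDist.norm_sum_le_of_forall_le_of_nonneg (NNReal.coe_nonneg _)
    intro d _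
    obtain ⟨N, hN, h⟩ := htor ζ hζ d
    rw [norm_mul, root_norm_one h hN, mul_one]
    have := Finset.le_sup (f := fun d => ‖F.coeff d‖₊) d.2
    exact_mod_cast this
  have hnon : S.Nonempty := by
    by_contra hemp
    apply hF
    have hinf : ({x : K | ∃ N : ℕ, N ≠ 0 ∧ x ^ N = 1}).Infinite := by
      choose η hη using hprim
      apply Set.infinite_of_injective_forall_mem (f := η)
      · intro a b hab
        have h1 := (hη a).eq_orderOf
        have h2 := (hη b).eq_orderOf
        rw [hab, ← h2] at h1
        exact Nat.pow_right_injective hp.two_le h1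
      · intro m
        exact ⟨p ^ m, pow_ne_zero _ hp.ne_zero, (hη m).pow_eq_one⟩
    apply MvPolynomial.funext_set (fun _ => {x : K | ∃ N : ℕ, N ≠ 0 ∧ x ^ N = 1}) (fun _ => hinf)
    intro x hx
    rw [map_zero]
    by_contra hne
    apply hemp
    choose N hN hxN using fun i => hx i (Set.mem_univ i)
    have hx0 : ∀ i, x i ≠ 0 := by
      intro i h
      have := hxN i
      rw [h, zero_pow (hN i)] at this
      exact zero_ne_one this
    refine ⟨_, fun i => Units.mk0 (x i) (hx0 i), fun i => ?_, hne, rfl⟩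
    rw [isOfFinOrder_iff_pow_eq_one]
    exact ⟨N i, Nat.pos_of_ne_zero (hN i), Units.ext (by simpa using hxN i)⟩
  have hinf : infMv F = sInf S := rfl
  have hge : δ ≤ infMv F := by
    rw [hinf]
    exact le_csInf hnon hlow
  have hpos : 0 < infMv F := lt_of_lt_of_le hδ hge
  have hle : infMv F ≤ mvGaussNorm F := by
    obtain ⟨r, hr⟩ := hnon
    rw [hinf]
    exact (csInf_le ⟨δ, hlow⟩ hr).trans (hup r hr)
  refine ⟨hpos, ?_⟩
  have hG : 0 < mvGaussNorm F := hpos.trans_le hle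
  rw [neg_nonneg]
  exact Real.log_nonpos (div_pos hpos hG).le ((div_le_one hG).2 hle)
end

section
/- Let p be a prime, F₁,…,F_m ∈ ℂ_p[X₁,…,X_n] polynomials, u₁,…,u_m ∈ ℤ^r pairwise distinct, η ∈ (μ_∞)^n a torsion point, and G < Gal(ℚ(η)/ℚ) such that for every τ ∈ G there is an index i with F_i(τ(η)) ≠ 0. Then there exists a torsion point ζ ∈ (μ_∞)^r such that F = ζ^{u₁}F₁ + ⋯ + ζ^{u_m}F_m satisfies F(τ(η)) ≠ 0 for all τ ∈ G and |F|_p = max{|F_i|_p : 1 ≤ i ≤ m}. -/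
theorem aux_sub_le {K : Type*} [NontriviallyNormedField K] [IsUltrametricDist K] (x y : K) :
    ‖x - y‖ ≤ max ‖x‖ ‖y‖ := by
  have := IsUltrametricDist.norm_add_le_max x (-y)
  rwa [← sub_eq_add_neg, norm_neg] at this

theorem aux_norm_natCast_le {K : Type*} [NontriviallyNormedField K] [IsUltrametricDist K] (n : ℕ) :
    ‖(n : K)‖ ≤ 1 := IsUltrametricDist.norm_natCast_le_one K n

theorem aux_norm_root {K : Type*} [NontriviallyNormedField K] {M : ℕ} (hM : M ≠ 0) {x : K}
    (hx : x ^ M = 1) : ‖x‖ = 1 := by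
  have h : ‖x‖ ^ M = 1 := by rw [← norm_pow, hx, norm_one]
  exact (pow_eq_one_iff_of_nonneg (norm_nonneg x) hM).1 h

theorem aux_one_sub {K : Type*} [NontriviallyNormedField K] [IsUltrametricDist K] {M : ℕ}
    (hM : M ≠ 0) (hM1 : ‖(M : K)‖ = 1) {z : K} (hz : z ^ M = 1) (hz1 : z ≠ 1) : ‖z - 1‖ = 1 := by
  have hn := aux_norm_root hM hz
  apply le_antisymm
  · have := aux_sub_le z 1
    simpa [hn] using this
  · by_contra! hlt
    have hg : ∑ i ∈ Finset.range M, z ^ i = 0 := by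
      have := geom_sum_mul z M
      rw [hz, sub_self] at this
      exact (mul_eq_zero.1 this).resolve_right (sub_ne_zero.2 hz1)
    have hs : ∑ i ∈ Finset.range M, (1 - z ^ i) = (M : K) := by
      rw [Finset.sum_sub_distrib, hg]; simp
    have hle : ‖(M : K)‖ ≤ ‖z - 1‖ := by
      rw [← hs]
      apply IsUltrametricDist.norm_sum_le_of_forall_le_of_nonneg (norm_nonneg _)
      intro i _
      rw [norm_sub_rev, ← geom_sum_mul z i, norm_mul]
      have : ‖∑ j ∈ Finset.range i, z ^ j‖ ≤ 1 := by
        apply IsUltrametricDist.norm_sum_le_of_forall_le_of_nonneg zero_le_one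
        intro j _
        simp [hn]
      nlinarith [norm_nonneg (z - 1)]
    linarith

theorem aux_sub {K : Type*} [NontriviallyNormedField K] [IsUltrametricDist K] {M : ℕ}
    (hM : M ≠ 0) (hM1 : ‖(M : K)‖ = 1) {x y : K} (hx : x ^ M = 1) (hy : y ^ M = 1) (hxy : x ≠ y) :
    ‖x - y‖ = 1 := by
  have hny := aux_norm_root hM hy
  have hy0 : y ≠ 0 := by rintro rfl; simp at hny
  have h := aux_one_sub hM hM1 (z := x / y) (by rw [div_pow, hx, hy, div_one])
    (by rwa [Ne, div_eq_one_iff_eq hy0])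
  have : x - y = (x / y - 1) * y := by field_simp
  rw [this, norm_mul, h, hny, one_mul]

theorem aux_mul {K : Type*} [NontriviallyNormedField K] [IsUltrametricDist K]
    (P Q : Polynomial K) (hP : ∀ k, ‖P.coeff k‖ ≤ 1) (hQ : ∀ k, ‖Q.coeff k‖ ≤ 1) (k : ℕ) :
    ‖(P * Q).coeff k‖ ≤ 1 := by
  rw [Polynomial.coeff_mul]
  apply IsUltrametricDist.norm_sum_le_of_forall_le_of_nonneg zero_le_one
  intro i _
  rw [norm_mul]
  exact mul_le_one₀ (hP _) (norm_nonneg _) (hQ _)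

theorem aux_basis {K : Type*} [NontriviallyNormedField K] [IsUltrametricDist K] [DecidableEq K]
    (S : Finset K) (hS : ∀ x ∈ S, ‖x‖ ≤ 1) (hd : ∀ x ∈ S, ∀ y ∈ S, x ≠ y → ‖x - y‖ = 1)
    (x : K) (hx : x ∈ S) (k : ℕ) : ‖(Lagrange.basis S id x).coeff k‖ ≤ 1 := by
  unfold Lagrange.basis
  revert k
  apply Finset.prod_induction _ (fun P : Polynomial K => ∀ k, ‖P.coeff k‖ ≤ 1)
  · exact fun P Q => aux_mul P Q
  · intro k
    rw [Polynomial.coeff_one]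
    split_ifs <;> simp
  · intro y hy k
    rw [Finset.mem_erase] at hy
    unfold Lagrange.basisDivisor
    rw [Polynomial.coeff_C_mul, norm_mul, norm_inv, id, id, hd x hx y hy.2 (Ne.symm hy.1),
      inv_one, one_mul, Polynomial.coeff_sub, Polynomial.coeff_X, Polynomial.coeff_C]
    refine (aux_sub_le _ _).trans (max_le ?_ ?_)
    · split_ifs <;> simp
    · split_ifs
      · exact hS y hy.2
      · simp

theorem aux_card {K : Type*} [NontriviallyNormedField K] [IsUltrametricDist K]
    (S : Finset K) (hS : ∀ x ∈ S, ‖x‖ ≤ 1) (hd : ∀ x ∈ S, ∀ y ∈ S, x ≠ y → ‖x - y‖ = 1)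
    (P : Polynomial K) (k : ℕ) (hP : ∀ x ∈ S, ‖P.eval x‖ < ‖P.coeff k‖) :
    S.card ≤ P.natDegree := by
  classical
  by_contra! hlt
  have hne : S.Nonempty := Finset.card_pos.1 (by omega)
  have hdeg : P.degree < S.card :=
    lt_of_le_of_lt Polynomial.degree_le_natDegree (by exact_mod_cast hlt)
  have hI := Lagrange.eq_interpolate (s := S) (v := id) (f := P) (fun _ _ _ _ h => h) hdeg
  have hc : P.coeff k = ∑ x ∈ S, P.eval x * (Lagrange.basis S id x).coeff k := by
    conv_lhs => rw [hI]
    simp [Lagrange.interpolate_apply]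
  obtain ⟨x0, hx0, hmax⟩ := S.exists_max_image (fun x => ‖P.eval x‖) hne
  have : ‖P.coeff k‖ ≤ ‖P.eval x0‖ := by
    rw [hc]
    apply IsUltrametricDist.norm_sum_le_of_forall_le_of_nonneg (norm_nonneg _)
    intro x hx
    rw [norm_mul]
    have h1 := aux_basis S hS hd x hx k
    have h2 := hmax x hx
    nlinarith [norm_nonneg (P.eval x)]
  linarith [hP x0 hx0]

theorem aux_exists {p : ℕ} (hp : p.Prime)
    {K : Type*} [NontriviallyNormedField K] [IsUltrametricDist K] [IsAlgClosed K]
    (hpnorm : ‖(p : K)‖ = (p : ℝ)⁻¹) (A : Finset (Polynomial K × ℕ)) :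
    ∃ w : Kˣ, IsOfFinOrder w ∧ ∀ a ∈ A, ‖a.1.coeff a.2‖ ≤ ‖a.1.eval (w : K)‖ := by
  classical
  set T := ∑ a ∈ A, a.1.natDegree with hT
  set M := p * T + 1 with hM
  have hM0 : M ≠ 0 := by omega
  have hTM : T < M := by nlinarith [hp.one_lt]
  have hM1 : ‖(M : K)‖ = 1 := by
    have hlt : ‖((p * T : ℕ) : K)‖ < ‖(1 : K)‖ := by
      rw [Nat.cast_mul, norm_mul, hpnorm, norm_one]
      have h1 := aux_norm_natCast_le (K := K) T
      have h2 : (p : ℝ)⁻¹ < 1 := inv_lt_one_of_one_lt₀ (by exact_mod_cast hp.one_lt)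
      have h3 : 0 ≤ (p : ℝ)⁻¹ := by positivity
      nlinarith
    rw [hM, Nat.cast_add, Nat.cast_one, IsUltrametricDist.norm_add_eq_max_of_norm_ne_norm hlt.ne,
      max_eq_right hlt.le, norm_one]
  have : NeZero (M : K) := ⟨by intro h; rw [h] at hM1; simp at hM1⟩
  obtain ⟨w0, hw0⟩ := HasEnoughRootsOfUnity.exists_primitiveRoot K M
  set S := Polynomial.nthRootsFinset M (1 : K) with hSdef
  have hcard : S.card = M := hw0.card_nthRootsFinset
  have hmem : ∀ x ∈ S, x ^ M = 1 := fun x hx =>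
    (Polynomial.mem_nthRootsFinset (by omega) 1).1 hx
  have hbad : ∃ x ∈ S, x ∉ A.biUnion fun a => S.filter fun x => ‖a.1.eval x‖ < ‖a.1.coeff a.2‖ := by
    apply Finset.exists_mem_notMem_of_card_lt_card
    rw [hcard]
    refine lt_of_le_of_lt (Finset.card_biUnion_le.trans (Finset.sum_le_sum ?_)) hTM
    intro a _
    apply aux_card _ _ _ a.1 a.2
    · intro x hx; exact (Finset.mem_filter.1 hx).2
    · intro x hx; exact (aux_norm_root hM0 (hmem x (Finset.mem_filter.1 hx).1)).le
    · intro x hx y hy hxy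
      exact aux_sub hM0 hM1 (hmem x (Finset.mem_filter.1 hx).1)
        (hmem y (Finset.mem_filter.1 hy).1) hxy
  obtain ⟨x, hxS, hx⟩ := hbad
  refine ⟨Units.ofPowEqOne x M (hmem x hxS) hM0, ?_, ?_⟩
  · exact isOfFinOrder_iff_pow_eq_one.2 ⟨M, by omega, Units.pow_ofPowEqOne _ _⟩
  · intro a ha
    by_contra! hlt
    exact hx (Finset.mem_biUnion.2 ⟨a, ha, Finset.mem_filter.2 ⟨hxS, by simpa using hlt⟩⟩)

theorem aux_vec {r m : ℕ} (u : Fin m → (Fin r → ℤ)) (hu : Function.Injective u) :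
    ∃ v : Fin r → ℤ, Function.Injective fun i => ∑ j, v j * u i j := by
  classical
  let Q : Fin m × Fin m → Polynomial ℤ := fun a =>
    ∑ j : Fin r, Polynomial.C (u a.1 j - u a.2 j) * Polynomial.X ^ (j : ℕ)
  have hQ : ∀ a : Fin m × Fin m, a.1 ≠ a.2 → Q a ≠ 0 := by
    intro a ha h0
    apply ha
    apply hu
    funext j
    have := congrArg (fun P => Polynomial.coeff P (j : ℕ)) h0
    simp only [Q, Polynomial.finsetSum_coeff, Polynomial.coeff_X_pow, Fin.val_inj,
      Polynomial.coeff_C_mul] at this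
    simp at this
    linarith
  have hprod : (∏ a ∈ Finset.univ.filter (fun a : Fin m × Fin m => a.1 ≠ a.2), Q a) ≠ 0 :=
    Finset.prod_ne_zero_iff.2 fun a ha => hQ a (Finset.mem_filter.1 ha).2
  obtain ⟨b, hb⟩ : ∃ b : ℤ,
      (∏ a ∈ Finset.univ.filter (fun a : Fin m × Fin m => a.1 ≠ a.2), Q a).eval b ≠ 0 := by
    by_contra! h
    exact hprod (Polynomial.funext fun b => by simpa using h b)
  refine ⟨fun j => b ^ (j : ℕ), ?_⟩
  intro i i' hii
  by_contra hne
  rw [Polynomial.eval_prod] at hb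
  refine Finset.prod_ne_zero_iff.1 hb (i, i') (by simp [hne]) ?_
  simp only [Q, Polynomial.eval_finsetSum, Polynomial.eval_mul, Polynomial.eval_C,
    Polynomial.eval_pow, Polynomial.eval_X]
  have : ∑ j : Fin r, (u i j - u i' j) * b ^ (j : ℕ)
      = ∑ j : Fin r, b ^ (j : ℕ) * u i j - ∑ j : Fin r, b ^ (j : ℕ) * u i' j := by
    rw [← Finset.sum_sub_distrib]
    exact Finset.sum_congr rfl fun j _ => by ring
  rw [this]
  exact sub_eq_zero.2 hii

theorem aux_nat {r m : ℕ} (u : Fin m → (Fin r → ℤ)) (hu : Function.Injective u) :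
    ∃ (v : Fin r → ℤ) (T : ℤ) (e : Fin m → ℕ), Function.Injective e ∧
      ∀ i, ∑ j, v j * u i j = e i + T := by
  obtain ⟨v, hv⟩ := aux_vec u hu
  set f : Fin m → ℤ := fun i => ∑ j, v j * u i j with hf
  have hle : ∀ i, 0 ≤ f i + ∑ i, |f i| := by
    intro i
    have h1 := Finset.single_le_sum (f := fun i => |f i|) (fun i _ => abs_nonneg _)
      (Finset.mem_univ i)
    have h2 := neg_abs_le (f i)
    linarith
  refine ⟨v, -∑ i, |f i|, fun i => (f i + ∑ i, |f i|).toNat, ?_, ?_⟩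
  · intro i i' h
    apply hv
    have h1 := hle i
    have h2 := hle i'
    simp only at h
    change f i = f i'
    omega
  · intro i
    rw [Int.toNat_of_nonneg (hle i)]
    simp [hf]

theorem aux_norm_unit {K : Type*} [NontriviallyNormedField K] {w : Kˣ} (hw : IsOfFinOrder w) :
    ‖(w : K)‖ = 1 := by
  obtain ⟨M, hM, h⟩ := isOfFinOrder_iff_pow_eq_one.1 hw
  exact aux_norm_root hM.ne' (by rw [← Units.val_pow_eq_pow_val, h, Units.val_one])

theorem aux_coeff_le {K : Type*} [NontriviallyNormedField K] {n : ℕ}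
    (F : MvPolynomial (Fin n) K) (d : Fin n →₀ ℕ) : ‖F.coeff d‖ ≤ mvGaussNorm F := by
  unfold mvGaussNorm
  by_cases hd : d ∈ F.support
  · have := Finset.le_sup (f := fun d => ‖F.coeff d‖₊) hd
    exact_mod_cast this
  · rw [MvPolynomial.notMem_support_iff.1 hd, norm_zero]
    exact NNReal.coe_nonneg _

theorem aux_gauss_le {K : Type*} [NontriviallyNormedField K] {n : ℕ}
    (F : MvPolynomial (Fin n) K) (c : NNReal) (h : ∀ d, ‖F.coeff d‖ ≤ c) : mvGaussNorm F ≤ c := by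
  unfold mvGaussNorm
  exact_mod_cast Finset.sup_le (f := fun d => ‖F.coeff d‖₊) fun d _ => h d

/-- Let `F₁,…,F_m ∈ ℂ_p[X₁,…,X_n]`, `u₁,…,u_m ∈ ℤ^r` pairwise distinct, `η` a torsion
point of `G_m^n` of order `N` and `G` a subset of `Gal(ℚ(η)/ℚ) ≅ (ZMod N)ˣ` (acting
by `η ↦ η^τ`) such that for every `τ ∈ G` some `F_i(τ(η)) ≠ 0`.  Then there is a
torsion point `ζ ∈ (μ_∞)^r` such that `F = ζ^{u₁}F₁ + ⋯ + ζ^{u_m}F_m` satisfies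
`F(τ(η)) ≠ 0` for all `τ ∈ G` and `|F|_p = max_i |F_i|_p`. -/
theorem stmt17 {p : ℕ} (hp : p.Prime)
    {K : Type*} [NontriviallyNormedField K] [IsUltrametricDist K] [IsAlgClosed K]
    [CompleteSpace K] (hpnorm : ‖(p : K)‖ = (p : ℝ)⁻¹)
    {n r m : ℕ} (F : Fin m → MvPolynomial (Fin n) K)
    (u : Fin m → (Fin r → ℤ)) (hu : Function.Injective u)
    {N : ℕ} (hN : 0 < N) (η : Fin n → Kˣ) (hη : orderOf η = N)
    (G : Finset (ZMod N)ˣ)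
    (hG : ∀ τ ∈ G, ∃ i,
      MvPolynomial.eval (fun j => ((η j ^ ((τ : ZMod N).val) : Kˣ) : K)) (F i) ≠ 0) :
    ∃ ζ : Fin r → Kˣ, (∀ j, IsOfFinOrder (ζ j)) ∧
      (∀ τ ∈ G,
        MvPolynomial.eval (fun j => ((η j ^ ((τ : ZMod N).val) : Kˣ) : K))
          (∑ i, MvPolynomial.C ((∏ j, ζ j ^ u i j : Kˣ) : K) * F i) ≠ 0) ∧
      mvGaussNorm (∑ i, MvPolynomial.C ((∏ j, ζ j ^ u i j : Kˣ) : K) * F i)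
        = ((Finset.univ.sup fun i => ((mvGaussNorm (F i)).toNNReal) : NNReal) : ℝ) := by
  classical
  obtain ⟨v, T, e, he, hve⟩ := aux_nat u hu
  let Q : (Fin m → K) → Polynomial K := fun c => ∑ i, Polynomial.C (c i) * Polynomial.X ^ e i
  have hQc : ∀ c i, (Q c).coeff (e i) = c i := by
    intro c i
    simp [Q, Polynomial.finsetSum_coeff, Polynomial.coeff_X_pow, he.eq_iff]
  let cG : (ZMod N)ˣ → Fin m → K := fun τ i =>
    MvPolynomial.eval (fun j => ((η j ^ ((τ : ZMod N).val) : Kˣ) : K)) (F i)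
  let cD : (Fin n →₀ ℕ) → Fin m → K := fun d i => (F i).coeff d
  let D : Finset (Fin n →₀ ℕ) := Finset.univ.biUnion fun i => (F i).support
  obtain ⟨w, hw, hwA⟩ := aux_exists hp hpnorm
    (((G.image fun τ => Q (cG τ)) ∪ (D.image fun d => Q (cD d))) ×ˢ (Finset.univ.image e))
  have hwn : ∀ k : ℤ, ‖((w ^ k : Kˣ) : K)‖ = 1 := fun k => by
    rw [Units.val_zpow_eq_zpow_val, norm_zpow, aux_norm_unit hw, one_zpow]
  have hprod : ∀ i, (∏ j, (w ^ v j) ^ u i j : Kˣ) = w ^ T * w ^ e i := by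
    intro i
    simp_rw [← zpow_mul]
    rw [← zpow_natCast, ← zpow_add, add_comm T, ← hve i]
    exact (map_sum (zmultiplesHom (Additive Kˣ) (Additive.ofMul w)) (fun j => v j * u i j)
      Finset.univ).symm
  have hsum : ∀ c : Fin m → K, ∑ i, ((∏ j, (w ^ v j) ^ u i j : Kˣ) : K) * c i
      = ((w ^ T : Kˣ) : K) * (Q c).eval (w : K) := by
    intro c
    simp only [Q, Polynomial.eval_finsetSum, Polynomial.eval_mul, Polynomial.eval_C,
      Polynomial.eval_pow, Polynomial.eval_X, Finset.mul_sum]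
    refine Finset.sum_congr rfl fun i _ => ?_
    rw [hprod i, Units.val_mul, Units.val_pow_eq_pow_val]
    ring
  have hcoeff : ∀ d, (∑ i, MvPolynomial.C ((∏ j, (w ^ v j) ^ u i j : Kˣ) : K) * F i).coeff d
      = ∑ i, ((∏ j, (w ^ v j) ^ u i j : Kˣ) : K) * cD d i := by
    intro d
    simp only [MvPolynomial.coeff_sum, MvPolynomial.coeff_C_mul, cD]
  have hgn : ∀ i, 0 ≤ mvGaussNorm (F i) := fun i => NNReal.coe_nonneg _
  refine ⟨fun j => w ^ v j, fun j => hw.zpow, ?_, ?_⟩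
  · intro τ hτ h0
    obtain ⟨i, hi⟩ := hG τ hτ
    have h1 : ∑ i, ((∏ j, (w ^ v j) ^ u i j : Kˣ) : K) * cG τ i = 0 := by
      rw [← h0, map_sum]
      refine Finset.sum_congr rfl fun i _ => ?_
      rw [map_mul, MvPolynomial.eval_C]
    rw [hsum] at h1
    have h2 := (mul_eq_zero.1 h1).resolve_left (Units.ne_zero _)
    have h3 := hwA (Q (cG τ), e i) (Finset.mem_product.2
      ⟨Finset.mem_union_left _ (Finset.mem_image_of_mem _ hτ),
        Finset.mem_image_of_mem _ (Finset.mem_univ i)⟩)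
    simp only [h2, norm_zero, hQc] at h3
    exact hi (norm_le_zero_iff.1 h3)
  · apply le_antisymm
    · apply aux_gauss_le
      intro d
      rw [hcoeff]
      apply IsUltrametricDist.norm_sum_le_of_forall_le_of_nonneg (NNReal.coe_nonneg _)
      intro i _
      rw [hprod i, ← zpow_natCast, ← zpow_add, norm_mul, hwn, one_mul]
      refine (aux_coeff_le (F i) d).trans ?_
      have h := Finset.le_sup (f := fun i => (mvGaussNorm (F i)).toNNReal) (Finset.mem_univ i)
      exact Real.toNNReal_le_iff_le_coe.1 h
    · rw [← NNReal.coe_mk (mvGaussNorm _) (NNReal.coe_nonneg _), NNReal.coe_le_coe]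
      apply Finset.sup_le
      intro i _
      rw [Real.toNNReal_le_iff_le_coe]
      apply aux_gauss_le
      intro d
      change _ ≤ mvGaussNorm _
      by_cases hd : d ∈ (F i).support
      · refine le_trans ?_ (aux_coeff_le _ d)
        rw [hcoeff, hsum, norm_mul, hwn, one_mul]
        have h3 := hwA (Q (cD d), e i) (Finset.mem_product.2
          ⟨Finset.mem_union_right _ (Finset.mem_image_of_mem _
            (Finset.mem_biUnion.2 ⟨i, Finset.mem_univ i, hd⟩)),
            Finset.mem_image_of_mem _ (Finset.mem_univ i)⟩)
        simpa only [hQc] using h3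
      · rw [MvPolynomial.notMem_support_iff.1 hd, norm_zero]
        exact NNReal.coe_nonneg _
end
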